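/- arXiv:1407.7684 — 5 statements merged into one kernel-verified Lean document; each statement's English description precedes it below -/
import Mathlib

section
/- Let n ≥ 1. For every vector h ∈ ℂ^n, the following teleportation identity holds in ℂ^n ⊗ ℂ^n ⊗ ℂ^n: h ⊗ ψ̄_n = (1/n) ∑_{k,l=1}^n η_{k,l} ⊗ T_{k,l}(h), where η_{k,l} = (u_k ⊗ v_l)(ψ̄_n) and T_{k,l} = v_l u_{−k}. -/
noncomputable section

open scoped BigOperators

/-- `ψ̄_n = (1/√n) ∑_i e_i ⊗ e_i`, viewed as a function of two indices. -/
def psibar (n : ℕ) : Fin n → Fin n → ℂ :=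
  fun a b => if a = b then (Real.sqrt n : ℂ)⁻¹ else 0

/-- The unitary `u_k` on `ℂ^n`, `u_k e_j = e^{2πi k j/n} e_j`. -/
def uop (n : ℕ) (k : Fin n) (f : Fin n → ℂ) : Fin n → ℂ :=
  fun j => Complex.exp (2 * (Real.pi : ℂ) * Complex.I * (k.val : ℂ) * (j.val : ℂ) / (n : ℂ)) * f j

/-- The unitary `v_l` on `ℂ^n`, `v_l e_j = e_{j+l}` (indices mod `n`). -/
def vop (n : ℕ) (l : Fin n) (f : Fin n → ℂ) : Fin n → ℂ :=
  fun j => f (j - l)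

/-- `T_{k,l} = v_l u_{-k}`, with `u_{-k} = u_{n-k}`. -/
def Tkl (n : ℕ) (k l : Fin n) (f : Fin n → ℂ) : Fin n → ℂ :=
  vop n l (uop n (-k) f)

/-- `η_{k,l} = (u_k ⊗ v_l)(ψ̄_n)`, viewed as a function of two indices. -/
def eta (n : ℕ) (k l : Fin n) : Fin n → Fin n → ℂ :=
  fun a b =>
    Complex.exp (2 * (Real.pi : ℂ) * Complex.I * (k.val : ℂ) * (a.val : ℂ) / (n : ℂ)) *
      psibar n a (b - l)

/-!
The index set `ℤ/n` may be replaced by any finite abelian group `G` and the clock operators `u_k` by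
multiplication with the characters of `G`. For a fixed shift `l`, summing over all characters
is Fourier inversion on `G`: it kills every term except the one with `c - l = a`. For this `l` the
translation invariance of the maximally entangled vector turns its entry at `(a, b - l)` into
its entry at `(b, c)`. The case of `ℤ/n` follows since `k ↦ e^{2πi k · / n}` enumerates its
characters.
-/

section MaxEntangled

variable {ι : Type*} [Fintype ι] [DecidableEq ι]

/-- The maximally entangled vector `|ι|^{-1/2} ∑_i e_i ⊗ e_i` of `ℂ^ι ⊗ ℂ^ι`, a tensor being
encoded by its matrix of coefficients. -/
def maxEntangled (a b : ι) : ℂ :=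
  if a = b then (Real.sqrt (Fintype.card ι) : ℂ)⁻¹ else 0

theorem maxEntangled_comm (a b : ι) : maxEntangled a b = maxEntangled b a := by
  simp only [maxEntangled, eq_comm]

theorem maxEntangled_sub_sub [AddGroup ι] (a b l : ι) :
    maxEntangled (a - l) (b - l) = maxEntangled a b := by
  simp only [maxEntangled, sub_left_inj]

theorem psibar_eq_maxEntangled (n : ℕ) : psibar n = maxEntangled := by
  ext a b
  simp only [psibar, maxEntangled, Fintype.card_fin]

end MaxEntangled

section FiniteAbelianGroup

variable {G : Type*} [AddCommGroup G]

/-- Multiplication by a character: the clock operator `u_χ e_j = χ(j) e_j` on `ℂ^G`. -/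
def modulation (χ : AddChar G ℂ) (f : G → ℂ) : G → ℂ :=
  fun j => χ j * f j

/-- The shift operator `v_l e_j = e_{j+l}` on `ℂ^G`. -/
def translation (l : G) (f : G → ℂ) : G → ℂ :=
  fun j => f (j - l)

/-- The operator `v_l u_χ⁻¹` which teleportation applies to the input when the measurement yields
`(χ, l)`. The inverse of `χ` is `-χ` since the dual group is written additively. -/
def teleportOp (χ : AddChar G ℂ) (l : G) (f : G → ℂ) : G → ℂ :=
  translation l (modulation (-χ) f)

variable [Fintype G] [DecidableEq G]

/-- The generalized Bell vector `(u_χ ⊗ v_l) (maxEntangled)`: the modulation acts on the first index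
and the translation on the second. -/
def bellVector (χ : AddChar G ℂ) (l a b : G) : ℂ :=
  modulation χ (fun i => translation l (maxEntangled i) b) a

theorem bellVector_mul_teleportOp (χ : AddChar G ℂ) (l : G) (h : G → ℂ) (a b c : G) :
    bellVector χ l a b * teleportOp χ l h c =
      χ (a - (c - l)) * (h (c - l) * maxEntangled a (b - l)) := by
  simp only [bellVector, teleportOp, modulation, translation, AddChar.neg_apply, sub_eq_add_neg a,
    AddChar.map_add_eq_mul]
  ring

theorem sum_addChar_bellVector_mul_teleportOp (l : G) (h : G → ℂ) (a b c : G) :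
    ∑ χ : AddChar G ℂ, bellVector χ l a b * teleportOp χ l h c =
      if l = c - a then Fintype.card G * (h a * maxEntangled b c) else 0 := by
  simp only [bellVector_mul_teleportOp, ← Finset.sum_mul, AddChar.sum_apply_eq_ite, ite_mul,
    zero_mul, sub_eq_zero]
  have shift_iff : a = c - l ↔ l = c - a := by rw [eq_sub_iff_add_eq', eq_sub_iff_add_eq]
  refine if_ctx_congr shift_iff (fun hl => ?_) fun _ => rfl
  obtain rfl : a = c - l := shift_iff.mpr hl
  rw [maxEntangled_sub_sub, maxEntangled_comm]

theorem statement2_general (h : G → ℂ) (a b c : G) :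
    h a * maxEntangled b c =
      (Fintype.card G : ℂ)⁻¹ *
        ∑ χ : AddChar G ℂ, ∑ l : G, bellVector χ l a b * teleportOp χ l h c := by
  have card_ne_zero : (Fintype.card G : ℂ) ≠ 0 := Nat.cast_ne_zero.mpr Fintype.card_ne_zero
  rw [Finset.sum_comm]
  simp only [sum_addChar_bellVector_mul_teleportOp, Finset.sum_ite_eq', Finset.mem_univ, if_true]
  rw [inv_mul_cancel_left₀ card_ne_zero]

end FiniteAbelianGroup

section CyclicGroup

theorem zmodAddEquiv_apply_eq_exp {n : ℕ} [NeZero n] (x y : ZMod n) :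
    AddChar.zmodAddEquiv x y =
      Complex.exp (2 * Real.pi * Complex.I * x.val * y.val / n) := by
  have zmod_apply : AddChar.zmod n x y = Circle.exp (2 * Real.pi * (x.val * y.val / n)) := by
    simpa using AddChar.zmod_intCast n x.val y.val
  calc AddChar.zmodAddEquiv x y = (AddChar.zmod n x y : ℂ) := rfl
    _ = Complex.exp (2 * Real.pi * Complex.I * x.val * y.val / n) := by
      rw [zmod_apply, Circle.coe_exp]
      push_cast
      ring_nf

/-- The isomorphism of `ℤ/n`, realized as `Fin n`, with its dual group, sending `k` to the character
`j ↦ e^{2πi k j / n}`. It is `AddChar.zmodAddEquiv`, as `ZMod (m + 1)` unfolds to `Fin (m + 1)`. -/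
def finAddEquivAddChar : ∀ (n : ℕ) [NeZero n], Fin n ≃+ AddChar (Fin n) ℂ
  | 0, h => (h.ne _ rfl).elim
  | m + 1, _ => AddChar.zmodAddEquiv (n := m + 1)

variable {n : ℕ} [NeZero n]

theorem finAddEquivAddChar_apply (k j : Fin n) :
    finAddEquivAddChar n k j = Complex.exp (2 * Real.pi * Complex.I * k.val * j.val / n) := by
  obtain _ | m := n
  · exact k.elim0
  · exact zmodAddEquiv_apply_eq_exp (n := m + 1) k j

theorem uop_eq_modulation (k : Fin n) : uop n k = modulation (finAddEquivAddChar n k) := by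
  ext f j
  rw [uop, modulation, finAddEquivAddChar_apply]

theorem Tkl_eq_teleportOp (k l : Fin n) : Tkl n k l = teleportOp (finAddEquivAddChar n k) l := by
  ext f j
  rw [Tkl, teleportOp, uop_eq_modulation, map_neg, vop, translation]

theorem eta_eq_bellVector (k l : Fin n) : eta n k l = bellVector (finAddEquivAddChar n k) l := by
  ext a b
  rw [eta, bellVector, modulation, translation, finAddEquivAddChar_apply, psibar_eq_maxEntangled]

end CyclicGroup

/-- the teleportation identity
`h ⊗ ψ̄_n = (1/n) ∑_{k,l} η_{k,l} ⊗ T_{k,l}(h)` in `ℂ^n ⊗ ℂ^n ⊗ ℂ^n` (pointwise identity). -/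
theorem statement2 (n : ℕ) (hn : 1 ≤ n) (h : Fin n → ℂ) (a b c : Fin n) :
    h a * psibar n b c =
      (n : ℂ)⁻¹ * ∑ k : Fin n, ∑ l : Fin n, eta n k l a b * Tkl n k l h c := by
  have : NeZero n := ⟨Nat.one_le_iff_ne_zero.mp hn⟩
  simpa only [psibar_eq_maxEntangled, eta_eq_bellVector, Tkl_eq_teleportOp, Fintype.card_fin,
    ← (finAddEquivAddChar n).bijective.sum_comp] using statement2_general h a b c
end
end

section
/- Let d ≥ 1, 1 ≤ p < ∞ and α, β, δ ∈ ℂ. Define the linear map Ψ_{α,β,δ} : ℂ^{d²} → ℂ^{d²} ⊕ ℂ^{d²} by Ψ_{α,β,δ}(a) = (α a + β (∑_{i,j} a_{i,j}) 𝟙, δ (∑_{i,j} a_{i,j}) 𝟙), where 𝟙 denotes the all-ones vector in ℂ^{d²}. Then the operator norm of Ψ_{α,β,δ} from ℓ_1^{d²} to the ℓ_p-direct sum ℓ_p^{d²} ⊕_p ℓ_p^{d²} (i.e., ℓ_p^{2d²}) equals (|α+β|^p + (d²−1)|β|^p + d²|δ|^p)^{1/p}. -/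
noncomputable section

open scoped BigOperators

/-- The `ℓ_p` norm of a finitely supported complex vector. -/
def lpNorm {ι : Type*} [Fintype ι] (p : ℝ) (x : ι → ℂ) : ℝ :=
  (∑ i, ‖x i‖ ^ p) ^ (1 / p)

/-- The map `Ψ_{α,β,δ} : ℂ^{d²} → ℂ^{d²} ⊕ ℂ^{d²}`,
`Ψ(a) = (α a + β (∑ a) 𝟙, δ (∑ a) 𝟙)`. -/
def Psi (d : ℕ) (α β δ : ℂ) (a : Fin d × Fin d → ℂ) :
    (Fin d × Fin d) ⊕ (Fin d × Fin d) → ℂ :=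
  Sum.elim (fun ij => α * a ij + β * ∑ kl, a kl) (fun _ => δ * ∑ kl, a kl)

/-!
Expanding `a = ∑ k, a k • e k`, the triangle inequality bounds a linear map out of `ℓ_1` by the
largest norm of its columns `T (e k)`, and the basis vectors attain that bound. All columns of `Ψ`
have the same norm: the entry `α + β` occurs once, `β` occurs `d² - 1` times and `δ` occurs `d²`
times.
-/

section ColumnNorms

variable {𝕜 ι F : Type*} [NormedField 𝕜] [Fintype ι] [DecidableEq ι]
  [SeminormedAddCommGroup F] [NormedSpace 𝕜 F]

theorem norm_map_le_sum_norm_mul_iSup (T : (ι → 𝕜) →ₗ[𝕜] F) (a : ι → 𝕜) :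
    ‖T a‖ ≤ (∑ k, ‖a k‖) * ⨆ k, ‖T (Pi.single k 1)‖ :=
  calc ‖T a‖ = ‖∑ k, a k • T (Pi.single k 1)‖ := by
        simp only [← map_smul, ← map_sum, ← Pi.single_smul, smul_eq_mul, mul_one,
          Finset.univ_sum_single]
    _ ≤ ∑ k, ‖a k‖ * ‖T (Pi.single k 1)‖ :=
        norm_sum_le_of_le _ fun k _ => norm_smul_le _ _
    _ ≤ ∑ k, ‖a k‖ * ⨆ k, ‖T (Pi.single k 1)‖ := by
        gcongr with k
        exact le_ciSup (f := fun k => ‖T (Pi.single k 1)‖) (Set.finite_range _).bddAbove k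
    _ = (∑ k, ‖a k‖) * ⨆ k, ‖T (Pi.single k 1)‖ := (Finset.sum_mul ..).symm

theorem sSup_norm_map_div_sum_norm (T : (ι → 𝕜) →ₗ[𝕜] F) :
    sSup {r : ℝ | ∃ a : ι → 𝕜, a ≠ 0 ∧ r = ‖T a‖ / ∑ k, ‖a k‖} =
      ⨆ k, ‖T (Pi.single k 1)‖ := by
  have columns_nonneg : 0 ≤ ⨆ k, ‖T (Pi.single k 1)‖ := Real.iSup_nonneg fun _ => norm_nonneg _
  have ratio_le : ∀ r ∈ {r : ℝ | ∃ a : ι → 𝕜, a ≠ 0 ∧ r = ‖T a‖ / ∑ k, ‖a k‖},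
      r ≤ ⨆ k, ‖T (Pi.single k 1)‖ := by
    rintro _ ⟨a, -, rfl⟩
    exact div_le_of_le_mul₀ (by positivity) columns_nonneg
      ((norm_map_le_sum_norm_mul_iSup T a).trans_eq (mul_comm _ _))
  refine le_antisymm (Real.sSup_le ratio_le columns_nonneg) (Real.iSup_le (fun k => ?_) ?_)
  · refine le_csSup ⟨_, ratio_le⟩ ⟨Pi.single k 1, by simp, ?_⟩
    simp [Pi.single_apply, apply_ite]
  · apply Real.sSup_nonneg
    rintro _ ⟨a, -, rfl⟩
    positivity

end ColumnNorms

section LpNorm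

variable {ι : Type*} [Fintype ι]

theorem lpNorm_one (x : ι → ℂ) : lpNorm 1 x = ∑ i, ‖x i‖ := by
  simp [lpNorm]

theorem lpNorm_eq_norm_toLp {p : ℝ} (hp : 0 < p) (x : ι → ℂ) :
    lpNorm p x = ‖WithLp.toLp (ENNReal.ofReal p) x‖ := by
  have toReal_p : (ENNReal.ofReal p).toReal = p := ENNReal.toReal_ofReal hp.le
  rw [PiLp.norm_eq_sum (toReal_p.symm ▸ hp), toReal_p, lpNorm]

theorem sSup_lpNorm_map_div_lpNorm_one {κ : Type*} [Fintype κ] [DecidableEq ι] {p : ℝ}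
    (hp : 1 ≤ p) (T : (ι → ℂ) →ₗ[ℂ] (κ → ℂ)) :
    sSup {r : ℝ | ∃ a : ι → ℂ, a ≠ 0 ∧ r = lpNorm p (T a) / lpNorm 1 a} =
      ⨆ k, lpNorm p (T (Pi.single k 1)) := by
  have : Fact (1 ≤ ENNReal.ofReal p) := ⟨ENNReal.one_le_ofReal.mpr hp⟩
  simp only [lpNorm_one, lpNorm_eq_norm_toLp (zero_lt_one.trans_le hp)]
  exact sSup_norm_map_div_sum_norm
    ((WithLp.linearEquiv (ENNReal.ofReal p) ℂ (κ → ℂ)).symm.toLinearMap ∘ₗ T)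

end LpNorm

theorem sum_update_const {ι R : Type*} [Fintype ι] [DecidableEq ι] [Ring R] (k : ι) (y z : R) :
    ∑ i, Function.update (fun _ => z) k y i = y + ((Fintype.card ι : R) - 1) * z := by
  have card_pos : 1 ≤ Fintype.card ι := Fintype.card_pos_iff.mpr ⟨k⟩
  rw [Finset.sum_update_of_mem (Finset.mem_univ k)]
  simp [Finset.card_sdiff, Nat.cast_sub card_pos]

section PsiMap

variable {ι κ : Type*} [Fintype ι]

variable (ι κ) in
/-- The map `Ψ_{α,β,δ}` as a linear map, with arbitrary index sets `ι` and `κ` for the two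
summands of the codomain; `Psi d` is the case `ι = κ = Fin d × Fin d`. -/
def psiMap (α β δ : ℂ) : (ι → ℂ) →ₗ[ℂ] (ι ⊕ κ → ℂ) where
  toFun a := Sum.elim (fun i => α * a i + β * ∑ k, a k) (fun _ => δ * ∑ k, a k)
  map_add' a b := by
    ext (i | j) <;> simp [Finset.sum_add_distrib] <;> ring
  map_smul' c a := by
    ext (i | j) <;> simp [← Finset.mul_sum] <;> ring

theorem psiMap_single_one [DecidableEq ι] (α β δ : ℂ) (k : ι) :
    psiMap ι κ α β δ (Pi.single k 1) =
      Sum.elim (Function.update (fun _ => β) k (α + β)) (fun _ => δ) := by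
  ext (i | j)
  · obtain rfl | hik := eq_or_ne i k <;> simp [psiMap, *]
  · simp [psiMap]

theorem psiMap_apply_eq_psi (d : ℕ) (α β δ : ℂ) (a : Fin d × Fin d → ℂ) :
    psiMap (Fin d × Fin d) (Fin d × Fin d) α β δ a = Psi d α β δ a :=
  rfl

theorem lpNorm_psiMap_single_one [DecidableEq ι] [Fintype κ] (p : ℝ) (α β δ : ℂ) (k : ι) :
    lpNorm p (psiMap ι κ α β δ (Pi.single k 1)) =
      (‖α + β‖ ^ p + ((Fintype.card ι : ℝ) - 1) * ‖β‖ ^ p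
        + (Fintype.card κ : ℝ) * ‖δ‖ ^ p) ^ (1 / p) := by
  simp [lpNorm, psiMap_single_one, Function.apply_update fun _ (w : ℂ) => ‖w‖ ^ p,
    sum_update_const]

end PsiMap

theorem statement5_general (ι κ : Type*) [Fintype ι] [Nonempty ι] [Fintype κ] {p : ℝ}
    (hp : 1 ≤ p) (α β δ : ℂ) :
    sSup {r : ℝ | ∃ a : ι → ℂ, a ≠ 0 ∧ r = lpNorm p (psiMap ι κ α β δ a) / lpNorm 1 a} =
      (‖α + β‖ ^ p + ((Fintype.card ι : ℝ) - 1) * ‖β‖ ^ p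
        + (Fintype.card κ : ℝ) * ‖δ‖ ^ p) ^ (1 / p) := by
  classical
  rw [sSup_lpNorm_map_div_lpNorm_one hp]
  simp only [lpNorm_psiMap_single_one, ciSup_const]

/-- the operator norm of `Ψ_{α,β,δ} : ℓ_1^{d²} → ℓ_p^{d²} ⊕_p ℓ_p^{d²}`
equals `(|α+β|^p + (d²−1)|β|^p + d²|δ|^p)^{1/p}`. -/
theorem statement5 (d : ℕ) (hd : 1 ≤ d) (p : ℝ) (hp1 : 1 ≤ p) (α β δ : ℂ) :
    sSup { r : ℝ | ∃ a : Fin d × Fin d → ℂ, a ≠ 0 ∧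
        r = lpNorm p (Psi d α β δ a) / lpNorm 1 a } =
      (‖α + β‖ ^ p + ((d : ℝ) ^ 2 - 1) * ‖β‖ ^ p + (d : ℝ) ^ 2 * ‖δ‖ ^ p) ^ (1 / p) := by
  have : NeZero d := ⟨Nat.one_le_iff_ne_zero.mp hd⟩
  simpa [sq, psiMap_apply_eq_psi] using statement5_general (Fin d × Fin d) (Fin d × Fin d) hp1 α β δ
end
end

section
/- Let 1 ≤ d ≤ n, 1 ≤ p < ∞ with conjugate exponent p', and λ ∈ [0,1]. Set α = λ d^{1/p'}, β = (1−λ)/(d^{1/p} n), δ = ((1−λ)/(d^{1/p} n))·((n−d)/d)^{1/p}. Define j_1 : M_d(ℂ) → M_d(ℂ) ⊗ ℂ^{d²} by j_1(ρ) = (1/d) ∑_{k,l=1}^d T_{k,l} ρ T_{k,l}* ⊗ e_{k,l}; define θ_λ^{d,p} : M_d(ℂ) → M_d(ℂ) ⊕ M_d(ℂ) by θ_λ^{d,p}(ρ) = (λρ + ((1−λ)/n) tr(ρ) I_d, ((1−λ)/n)((n−d)/d)^{1/p} tr(ρ) I_d); define J̃_p : M_d(ℂ) ⊕ M_d(ℂ)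 → M_d(ℂ) ⊗ (ℂ^{d²} ⊕ ℂ^{d²}) by J̃_p(ρ_1, ρ_2) = d^{−1/p}(∑_{k,l=1}^d T_{k,l} ρ_1 T_{k,l}* ⊗ e_{k,l;1} + ∑_{k,l=1}^d T_{k,l} ρ_2 T_{k,l}* ⊗ e_{k,l;2}). Then (id_{M_d} ⊗ Ψ_{α,β,δ}) ∘ j_1 = J̃_p ∘ θ_λ^{d,p} as linear maps M_d(ℂ) → M_d(ℂ) ⊗ (ℂ^{d²} ⊕ ℂ^{d²}). -/
noncomputable section

open scoped BigOperators
open Matrix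

/-- The matrix of the unitary `u_k` on `ℂ^d`, `u_k e_j = e^{2πi k j/d} e_j`. -/
def umat (d : ℕ) (k : Fin d) : Matrix (Fin d) (Fin d) ℂ :=
  Matrix.diagonal fun j =>
    Complex.exp (2 * (Real.pi : ℂ) * Complex.I * (k.val : ℂ) * (j.val : ℂ) / (d : ℂ))

/-- The matrix of the unitary `v_l` on `ℂ^d`, `v_l e_j = e_{j+l}` (indices mod `d`). -/
def vmat (d : ℕ) (l : Fin d) : Matrix (Fin d) (Fin d) ℂ :=
  fun a b => if a = b + l then 1 else 0

/-- `T_{k,l} = v_l u_{-k}` with `u_{-k} = u_{d-k}`, as a matrix. -/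
def Tmat (d : ℕ) (k l : Fin d) : Matrix (Fin d) (Fin d) ℂ :=
  vmat d l * umat d (-k)

/-- `j_1(ρ) = (1/d) ∑_{k,l} T_{k,l} ρ T_{k,l}* ⊗ e_{k,l}`, as the family of coefficients
of the basis vectors `e_{k,l}` of `ℂ^{d²}`. -/
def jone (d : ℕ) (ρ : Matrix (Fin d) (Fin d) ℂ) : Fin d × Fin d → Matrix (Fin d) (Fin d) ℂ :=
  fun kl => (d : ℂ)⁻¹ • (Tmat d kl.1 kl.2 * ρ * (Tmat d kl.1 kl.2)ᴴ)

/-- `id_{M_d} ⊗ Ψ_{α,β,δ}` acting on `M_d ⊗ ℂ^{d²}`, elements of which are recorded as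
families of matrix coefficients of the basis vectors `e_{k,l}` (resp. `e_{k,l;1}, e_{k,l;2}`). -/
def idTensorPsi (d : ℕ) (α β δ : ℂ) (F : Fin d × Fin d → Matrix (Fin d) (Fin d) ℂ) :
    (Fin d × Fin d) ⊕ (Fin d × Fin d) → Matrix (Fin d) (Fin d) ℂ :=
  Sum.elim (fun kl => α • F kl + β • ∑ ij, F ij) (fun _ => δ • ∑ ij, F ij)

/-- The map `θ_λ^{d,p} : M_d → M_d ⊕ M_d`. -/
def theta (n d : ℕ) (lam p : ℝ) (ρ : Matrix (Fin d) (Fin d) ℂ) :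
    Matrix (Fin d) (Fin d) ℂ × Matrix (Fin d) (Fin d) ℂ :=
  ((lam : ℂ) • ρ + (((1 - lam) / n : ℝ) : ℂ) • Matrix.trace ρ • (1 : Matrix (Fin d) (Fin d) ℂ),
   ((((1 - lam) / n) * (((n : ℝ) - d) / d) ^ (1 / p) : ℝ) : ℂ) •
     Matrix.trace ρ • (1 : Matrix (Fin d) (Fin d) ℂ))

/-- `J̃_p : M_d ⊕ M_d → M_d ⊗ (ℂ^{d²} ⊕ ℂ^{d²})`. -/
def Jtilde (d : ℕ) (p : ℝ) (ρs : Matrix (Fin d) (Fin d) ℂ × Matrix (Fin d) (Fin d) ℂ) :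
    (Fin d × Fin d) ⊕ (Fin d × Fin d) → Matrix (Fin d) (Fin d) ℂ :=
  Sum.elim
    (fun kl => (((d : ℝ) ^ (-(1 / p)) : ℝ) : ℂ) • (Tmat d kl.1 kl.2 * ρs.1 * (Tmat d kl.1 kl.2)ᴴ))
    (fun kl => (((d : ℝ) ^ (-(1 / p)) : ℝ) : ℂ) • (Tmat d kl.1 kl.2 * ρs.2 * (Tmat d kl.1 kl.2)ᴴ))

/-!
Conjugation by the clock matrices `u_k` multiplies the `(a, b)` entry by the `k`-th power of
`ζ ^ (a - b)`, where `ζ = e^{2πi/d}`, so summing over `k` kills the off-diagonal entries;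
conjugation by the shift matrices `v_l` permutes the diagonal cyclically, so summing over `l` turns
every diagonal entry into the trace. Hence `∑ T_{k,l} ρ T_{k,l}* = d tr(ρ) I`. As the `T_{k,l}` are
unitary, multiples of `I` are fixed by each conjugation, so the rank-one part of `Ψ` matches the
trace terms of `θ`.
-/

lemma sum_zpow_pow_of_isPrimitiveRoot {K : Type*} [Field K] {ζ : K} {d : ℕ}
    (hζ : IsPrimitiveRoot ζ d) (m : ℤ) :
    ∑ k ∈ Finset.range d, (ζ ^ m) ^ k = if (d : ℤ) ∣ m then (d : K) else 0 := by
  split_ifs with hm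
  · simp [(hζ.zpow_eq_one_iff_dvd m).2 hm]
  · have hne : ζ ^ m ≠ 1 := mt (hζ.zpow_eq_one_iff_dvd m).1 hm
    have hpow : (ζ ^ m) ^ d = 1 := by
      rw [← zpow_natCast, zpow_comm, zpow_natCast, hζ.pow_eq_one, _root_.one_zpow]
    rw [geom_sum_eq hne, hpow, sub_self, zero_div]

lemma dvd_val_sub_val_iff {d : ℕ} (a b : Fin d) : (d : ℤ) ∣ (a : ℤ) - b ↔ a = b := by
  refine ⟨fun h => ?_, fun h => by simp [h]⟩
  have := Int.eq_zero_of_abs_lt_dvd h (by rw [abs_lt]; omega)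
  omega

lemma umat_eq_diagonal_pow (d : ℕ) (k : Fin d) :
    umat d k =
      diagonal fun j : Fin d =>
        (Complex.exp (2 * Real.pi * Complex.I / d) ^ (j : ℕ)) ^ (k : ℕ) := by
  refine congrArg diagonal (funext fun j => ?_)
  rw [← Complex.exp_nat_mul, ← Complex.exp_nat_mul]
  ring_nf

lemma Tmat_conj {d : ℕ} (k l : Fin d) (A : Matrix (Fin d) (Fin d) ℂ) :
    Tmat d k l * A * (Tmat d k l)ᴴ =
      vmat d l * (umat d (-k) * A * (umat d (-k))ᴴ) * (vmat d l)ᴴ := by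
  simp only [Tmat, conjTranspose_mul, mul_assoc]

section ClockAndShift

variable {d : ℕ} [NeZero d]

lemma umat_conj_apply (k : Fin d) (A : Matrix (Fin d) (Fin d) ℂ) (a b : Fin d) :
    (umat d k * A * (umat d k)ᴴ) a b =
      (Complex.exp (2 * Real.pi * Complex.I / d) ^ ((a : ℤ) - b)) ^ (k : ℕ) * A a b := by
  have hζ := Complex.isPrimitiveRoot_exp d (NeZero.ne d)
  have hstar : star (Complex.exp (2 * Real.pi * Complex.I / d)) =
      (Complex.exp (2 * Real.pi * Complex.I / d))⁻¹ :=
    (Complex.inv_eq_conj (hζ.norm'_eq_one (NeZero.ne d))).symm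
  rw [umat_eq_diagonal_pow, diagonal_conjTranspose, mul_diagonal, diagonal_mul, Pi.star_apply,
    star_pow, star_pow, hstar, zpow_sub₀ (Complex.exp_ne_zero _), zpow_natCast, zpow_natCast,
    div_pow, inv_pow, inv_pow]
  ring

lemma umat_mul_conjTranspose (k : Fin d) : umat d k * (umat d k)ᴴ = 1 := by
  ext a b
  have hconj := umat_conj_apply k 1 a b
  rw [mul_one] at hconj
  obtain rfl | hab := eq_or_ne a b
  · simp [hconj]
  · simp [hconj, hab]

lemma sum_umat_conj (A : Matrix (Fin d) (Fin d) ℂ) :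
    ∑ k, umat d k * A * (umat d k)ᴴ = (d : ℂ) • diagonal A.diag := by
  have hζ := Complex.isPrimitiveRoot_exp d (NeZero.ne d)
  ext a b
  simp only [Matrix.sum_apply, umat_conj_apply]
  rw [← Finset.sum_mul, Fin.sum_univ_eq_sum_range (fun k => (_ ^ ((a : ℤ) - b)) ^ k),
    sum_zpow_pow_of_isPrimitiveRoot hζ, Matrix.smul_apply, diagonal_apply]
  by_cases hab : a = b <;> simp [dvd_val_sub_val_iff, hab]

lemma vmat_conj (l : Fin d) (A : Matrix (Fin d) (Fin d) ℂ) :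
    vmat d l * A * (vmat d l)ᴴ = A.submatrix (Equiv.subRight l) (Equiv.subRight l) := by
  have hv : vmat d l =
      (1 : Matrix (Fin d) (Fin d) ℂ).submatrix (Equiv.subRight l) (Equiv.refl _) := by
    ext a b
    simp [vmat, one_apply, sub_eq_iff_eq_add]
  rw [hv, conjTranspose_submatrix, conjTranspose_one, one_submatrix_mul, mul_submatrix_one]
  rfl

lemma sum_vmat_conj_diagonal (x : Fin d → ℂ) :
    ∑ l, vmat d l * diagonal x * (vmat d l)ᴴ = (∑ j, x j) • 1 := by
  ext a b
  simp only [vmat_conj, submatrix_diagonal_equiv, Matrix.sum_apply, Matrix.smul_apply,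
    diagonal_apply, one_apply, Function.comp_apply, Equiv.subRight_apply]
  split_ifs
  · simpa using (Equiv.subLeft a).sum_comp x
  · simp

lemma Tmat_mul_conjTranspose (k l : Fin d) : Tmat d k l * (Tmat d k l)ᴴ = 1 := by
  have hv : vmat d l * (vmat d l)ᴴ = 1 := by simpa using vmat_conj l 1
  simpa [umat_mul_conjTranspose, hv] using Tmat_conj k l 1

lemma sum_Tmat_conj (ρ : Matrix (Fin d) (Fin d) ℂ) :
    ∑ kl : Fin d × Fin d, Tmat d kl.1 kl.2 * ρ * (Tmat d kl.1 kl.2)ᴴ =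
      ((d : ℂ) * trace ρ) • 1 := by
  have hneg : ∑ k, umat d (-k) * ρ * (umat d (-k))ᴴ = ∑ k, umat d k * ρ * (umat d k)ᴴ :=
    Equiv.sum_comp (Equiv.neg (Fin d)) fun k => umat d k * ρ * (umat d k)ᴴ
  calc ∑ kl : Fin d × Fin d, Tmat d kl.1 kl.2 * ρ * (Tmat d kl.1 kl.2)ᴴ
      = ∑ l, vmat d l * (∑ k, umat d (-k) * ρ * (umat d (-k))ᴴ) * (vmat d l)ᴴ := by
        simp only [Fintype.sum_prod_type_right, Tmat_conj, Finset.mul_sum, Finset.sum_mul]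
    _ = ∑ l, vmat d l * ((d : ℂ) • diagonal ρ.diag) * (vmat d l)ᴴ := by
        rw [hneg, sum_umat_conj]
    _ = (d : ℂ) • ∑ l, vmat d l * diagonal ρ.diag * (vmat d l)ᴴ := by
        simp only [Matrix.mul_smul, Matrix.smul_mul, Finset.smul_sum]
    _ = ((d : ℂ) * trace ρ) • 1 := by
        rw [sum_vmat_conj_diagonal, smul_smul, trace]

end ClockAndShift

/-- The family of all conjugates `T_{k,l} ρ T_{k,l}*`, as a linear map in `ρ`; both `j_1` and `J̃_p`
are rescalings of it. Families indexed by `(k, l)` encode `M_d ⊗ ℂ^{d²}`. -/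
def weylOrbit (d : ℕ) :
    Matrix (Fin d) (Fin d) ℂ →ₗ[ℂ] (Fin d × Fin d → Matrix (Fin d) (Fin d) ℂ) :=
  LinearMap.pi fun kl => LinearMap.mulLeftRight ℂ (Tmat d kl.1 kl.2, (Tmat d kl.1 kl.2)ᴴ)

lemma jone_eq_smul_weylOrbit (d : ℕ) (ρ : Matrix (Fin d) (Fin d) ℂ) :
    jone d ρ = (d : ℂ)⁻¹ • weylOrbit d ρ :=
  rfl

lemma Jtilde_eq_sumElim_weylOrbit (d : ℕ) (p : ℝ)
    (ρs : Matrix (Fin d) (Fin d) ℂ × Matrix (Fin d) (Fin d) ℂ) :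
    Jtilde d p ρs =
      Sum.elim ((((d : ℝ) ^ (-(1 / p)) : ℝ) : ℂ) • weylOrbit d ρs.1)
        ((((d : ℝ) ^ (-(1 / p)) : ℝ) : ℂ) • weylOrbit d ρs.2) :=
  rfl

section Intertwining

variable {d : ℕ} [NeZero d]

lemma weylOrbit_one : weylOrbit d 1 = 1 := by
  ext1 kl
  simpa [weylOrbit] using Tmat_mul_conjTranspose kl.1 kl.2

lemma sum_jone (ρ : Matrix (Fin d) (Fin d) ℂ) : ∑ kl, jone d ρ kl = trace ρ • 1 := by
  have hd : (d : ℂ) ≠ 0 := NeZero.ne _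
  simp only [jone]
  rw [← Finset.smul_sum, sum_Tmat_conj, smul_smul, inv_mul_cancel_left₀ hd]

lemma idTensorPsi_jone (α β δ : ℂ) (ρ : Matrix (Fin d) (Fin d) ℂ) :
    idTensorPsi d α β δ (jone d ρ) =
      Sum.elim (weylOrbit d ((α / d) • ρ + β • trace ρ • 1))
        (weylOrbit d (δ • trace ρ • 1)) := by
  rw [idTensorPsi, sum_jone, jone_eq_smul_weylOrbit]
  simp only [map_add, map_smul, weylOrbit_one, div_eq_mul_inv, mul_smul]
  rfl

theorem statement6_general {p : ℝ} (_hp : p ≠ 0) (a b c : ℂ) (ρ : Matrix (Fin d) (Fin d) ℂ) :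
    idTensorPsi d (a * ((d : ℝ) ^ (1 - 1 / p) : ℝ)) (b / ((d : ℝ) ^ (1 / p) : ℝ))
        (c / ((d : ℝ) ^ (1 / p) : ℝ)) (jone d ρ) =
      Jtilde d p (a • ρ + b • trace ρ • 1, c • trace ρ • 1) := by
  have hd : (0 : ℝ) < d := Nat.cast_pos.2 (NeZero.pos d)
  have hα : a * ((d : ℝ) ^ (1 - 1 / p) : ℝ) / d = ((d : ℝ) ^ (-(1 / p)) : ℝ) * a := by
    rw [mul_div_assoc, ← Complex.ofReal_natCast, ← Complex.ofReal_div, ← Real.rpow_sub_one hd.ne',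
      sub_sub_cancel_left, mul_comm]
  have hdiv (z : ℂ) : z / ((d : ℝ) ^ (1 / p) : ℝ) = ((d : ℝ) ^ (-(1 / p)) : ℝ) * z := by
    rw [Real.rpow_neg hd.le, Complex.ofReal_inv, div_eq_inv_mul]
  rw [idTensorPsi_jone, hα, hdiv, hdiv, Jtilde_eq_sumElim_weylOrbit]
  simp only [← map_smul, smul_add, mul_smul]

end Intertwining

/-- with `α = λ d^{1/p'}`, `β = (1−λ)/(d^{1/p} n)`,
`δ = ((1−λ)/(d^{1/p} n))·((n−d)/d)^{1/p}` (here `1/p' = 1 − 1/p`), one has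
`(id_{M_d} ⊗ Ψ_{α,β,δ}) ∘ j_1 = J̃_p ∘ θ_λ^{d,p}`. -/
theorem statement6 (n d : ℕ) (hd : 1 ≤ d) (hdn : d ≤ n) (p : ℝ) (hp : 1 ≤ p)
    (lam : ℝ) (hl0 : 0 ≤ lam) (hl1 : lam ≤ 1)
    (ρ : Matrix (Fin d) (Fin d) ℂ) :
    idTensorPsi d
        ((lam * (d : ℝ) ^ (1 - 1 / p) : ℝ) : ℂ)
        ((((1 - lam) / ((d : ℝ) ^ (1 / p) * n)) : ℝ) : ℂ)
        ((((1 - lam) / ((d : ℝ) ^ (1 / p) * n)) * (((n : ℝ) - d) / d) ^ (1 / p) : ℝ) : ℂ)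
        (jone d ρ) =
      Jtilde d p (theta n d lam p ρ) := by
  have : NeZero d := ⟨by omega⟩
  rw [theta, ← statement6_general (zero_lt_one.trans_le hp).ne']
  congr 1 <;> push_cast <;> ring
end
end

section
/- Let 1 ≤ d ≤ n and λ ∈ [0,1], and let E_λ : M_n(ℂ) → M_{n+1}(ℂ) be the quantum erasure channel, E_λ(ρ) = block-diag(λρ, (1−λ)tr(ρ)). Then C_prod^d(E_λ) = λ log₂(nd). -/
noncomputable section

open scoped BigOperators ComplexOrder
open Matrix

/-- The von Neumann entropy (base 2) `S(ρ) = −tr(ρ log₂ ρ)`, computed via the eigenvalues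
(with the convention `0 log 0 = 0`). -/
def entropy2 {ι : Type*} [Fintype ι] [DecidableEq ι] (ρ : Matrix ι ι ℂ) : ℝ :=
  if h : ρ.IsHermitian then -∑ i, h.eigenvalues i * Real.logb 2 (h.eigenvalues i) else 0

/-- The partial trace over the first tensor factor, `(tr ⊗ id)`. -/
def ptrace1 {ι κ : Type*} [Fintype ι] (X : Matrix (ι × κ) (ι × κ) ℂ) : Matrix κ κ ℂ :=
  fun u v => ∑ a : ι, X (a, u) (a, v)

/-- The partial trace over the second tensor factor, `(id ⊗ tr)`. -/
def ptrace2 {ι κ : Type*} [Fintype κ] (X : Matrix (ι × κ) (ι × κ) ℂ) : Matrix ι ι ℂ :=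
  fun a b => ∑ j : κ, X (a, j) (b, j)

/-- `id_d ⊗ N`, applying `N` to each `d × d` block. -/
def idTensor (d : ℕ) {ι κ : Type*}
    (N : Matrix ι ι ℂ → Matrix κ κ ℂ)
    (X : Matrix (Fin d × ι) (Fin d × ι) ℂ) : Matrix (Fin d × κ) (Fin d × κ) ℂ :=
  fun pq rs => N (fun u v => X (pq.1, u) (rs.1, v)) pq.2 rs.2

/-- The product-state classical capacity with `d`-dimensional entanglement assistance,
`C_prod^d(N) = sup { S(∑ λ_i N((tr_d ⊗ id)(ρ_i))) + ∑ λ_i [S((id ⊗ tr)(ρ_i)) − S((id_d ⊗ N)(ρ_i))] }`,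
the supremum running over finite ensembles of states `ρ_i` on `ℂ^d ⊗ ℂ^n`. -/
def Cprod (d : ℕ) {ι κ : Type*} [Fintype ι] [DecidableEq ι] [Fintype κ] [DecidableEq κ]
    (N : Matrix ι ι ℂ → Matrix κ κ ℂ) : ℝ :=
  sSup { r : ℝ | ∃ (k : ℕ) (w : Fin k → ℝ) (ρ : Fin k → Matrix (Fin d × ι) (Fin d × ι) ℂ),
    (∀ i, 0 ≤ w i) ∧ (∑ i, w i = 1) ∧
    (∀ i, (ρ i).PosSemidef ∧ Matrix.trace (ρ i) = 1) ∧
    r = entropy2 (∑ i, w i • N (ptrace1 (ρ i))) +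
        ∑ i, w i * (entropy2 (ptrace2 (ρ i)) - entropy2 (idTensor d N (ρ i))) }

/-- The quantum depolarizing channel `D_λ(ρ) = λρ + (1−λ)(tr(ρ)/n) I_n`. -/
def depol (n : ℕ) (lam : ℝ) (ρ : Matrix (Fin n) (Fin n) ℂ) : Matrix (Fin n) (Fin n) ℂ :=
  (lam : ℂ) • ρ + (((1 - lam) / n : ℝ) : ℂ) • Matrix.trace ρ • (1 : Matrix (Fin n) (Fin n) ℂ)

/-- The quantum erasure channel `E_λ : M_n → M_{n+1}`,
`E_λ(ρ) = block-diag(λρ, (1−λ)tr(ρ))`. -/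
def erasure (n : ℕ) (lam : ℝ) (ρ : Matrix (Fin n) (Fin n) ℂ) :
    Matrix (Fin (n + 1)) (Fin (n + 1)) ℂ :=
  fun a b =>
    if ha : (a : ℕ) < n then
      if hb : (b : ℕ) < n then (lam : ℂ) * ρ ⟨a, ha⟩ ⟨b, hb⟩ else 0
    else if (b : ℕ) < n then 0 else ((1 - lam : ℝ) : ℂ) * Matrix.trace ρ

/-! The erasure channel reveals whether the input was erased, so its output is a direct sum and the
entropy of the erasure flag splits off: `S(E_λ ρ) = λ S(ρ) + h(λ)` and
`S((id ⊗ E_λ) ρ) = λ S(ρ) + (1 - λ) S((id ⊗ tr) ρ) + h(λ)`, with `h` the binary entropy. The two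
copies of `h(λ)` cancel, so every ensemble has `λ` times its rate over the noiseless channel.
Over the noiseless channel the rate is `S(∑ w_i tr_d ρ_i) + ∑ w_i (S((id ⊗ tr) ρ_i) - S(ρ_i))`, at
most `log n + log d`. Superdense coding attains this: the shifts of a maximally entangled vector
give pure states with maximally mixed `d`-dimensional marginals, whose other marginals average to
the maximally mixed state. -/

section Entropy

variable {ι κ : Type*} [Fintype ι] [DecidableEq ι] [Fintype κ] [DecidableEq κ]
  {A : Matrix ι ι ℂ} {B : Matrix κ κ ℂ}

lemma entropy2_eq_sum_negMulLog (hA : A.IsHermitian) :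
    entropy2 A = (∑ i, Real.negMulLog (hA.eigenvalues i)) / Real.log 2 := by
  simp only [entropy2, dif_pos hA, Real.negMulLog_eq_neg, Real.logb, Finset.sum_neg_distrib,
    neg_div, Finset.sum_div, mul_div_assoc]

lemma entropy2_eq_sum_roots_charpoly (hA : A.IsHermitian) :
    entropy2 A = (A.charpoly.roots.map fun z ↦ Real.negMulLog z.re).sum / Real.log 2 := by
  rw [entropy2_eq_sum_negMulLog hA, hA.roots_charpoly_eq_eigenvalues, Multiset.map_map]
  rfl

lemma entropy2_reindex (e : ι ≃ κ) (hA : A.IsHermitian) :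
    entropy2 (reindex e e A) = entropy2 A := by
  rw [entropy2_eq_sum_roots_charpoly (hA.reindex e), charpoly_reindex,
    entropy2_eq_sum_roots_charpoly hA]

lemma entropy2_fromBlocks (hA : A.IsHermitian) (hB : B.IsHermitian) :
    entropy2 (fromBlocks A 0 0 B) = entropy2 A + entropy2 B := by
  have hAB : (fromBlocks A 0 0 B).IsHermitian := hA.fromBlocks conjTranspose_zero hB
  have hne : A.charpoly * B.charpoly ≠ 0 :=
    mul_ne_zero A.charpoly_monic.ne_zero B.charpoly_monic.ne_zero
  rw [entropy2_eq_sum_roots_charpoly hAB, charpoly_fromBlocks_zero₁₂, Polynomial.roots_mul hne,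
    Multiset.map_add, Multiset.sum_add, add_div, entropy2_eq_sum_roots_charpoly hA,
    entropy2_eq_sum_roots_charpoly hB]

lemma entropy2_cfc (hA : A.IsHermitian) (f : ℝ → ℝ) :
    entropy2 (cfc f A) = (∑ i, Real.negMulLog (f (hA.eigenvalues i))) / Real.log 2 := by
  rw [entropy2_eq_sum_roots_charpoly (cfc_predicate f A).isHermitian, hA.charpoly_cfc_eq,
    Polynomial.roots_prod _ _ (Finset.prod_ne_zero_iff.2 fun i _ ↦ Polynomial.X_sub_C_ne_zero _)]
  simp

lemma sum_eigenvalues_eq_re_trace (hA : A.IsHermitian) :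
    ∑ i, hA.eigenvalues i = A.trace.re := by
  simp [hA.trace_eq_sum_eigenvalues]

lemma entropy2_smul (hA : A.IsHermitian) (c : ℝ) :
    entropy2 (c • A) = c * entropy2 A + A.trace.re * Real.negMulLog c / Real.log 2 := by
  rw [← cfc_smul_id (R := ℝ) c A hA.isSelfAdjoint, entropy2_cfc hA, entropy2_eq_sum_negMulLog hA]
  simp only [smul_eq_mul, Real.negMulLog_mul, Finset.sum_add_distrib, ← Finset.sum_mul,
    ← Finset.mul_sum, sum_eigenvalues_eq_re_trace]
  ring

lemma entropy2_of_isIdempotentElem (hA : A.IsHermitian) (hAA : IsIdempotentElem A) :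
    entropy2 A = 0 := by
  have h_eig (i : ι) : Real.negMulLog (hA.eigenvalues i) = 0 := by
    obtain h | h : hA.eigenvalues i = 0 ∨ hA.eigenvalues i = 1 :=
      hAA.spectrum_subset ℝ (hA.eigenvalues_mem_spectrum_real i)
    all_goals simp [h]
  simp [entropy2_eq_sum_negMulLog hA, h_eig]

lemma entropy2_vecMulVec_star {ψ : ι → ℂ} (hψ : star ψ ⬝ᵥ ψ = 1) :
    entropy2 (vecMulVec ψ (star ψ)) = 0 := by
  refine entropy2_of_isIdempotentElem (posSemidef_vecMulVec_self_star ψ).isHermitian ?_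
  rw [IsIdempotentElem, vecMulVec_mul_vecMulVec, hψ]
  simp

lemma entropy2_inv_card_smul_one [Nonempty ι] :
    entropy2 ((Fintype.card ι : ℝ)⁻¹ • (1 : Matrix ι ι ℂ)) = Real.logb 2 (Fintype.card ι) := by
  rw [entropy2_smul isHermitian_one, entropy2_of_isIdempotentElem isHermitian_one .one,
    Real.logb, Real.negMulLog, Real.log_inv, trace_one, Complex.natCast_re]
  field_simp
  ring

end Entropy

section DensityMatrix

variable {ι κ τ : Type*} [Fintype ι] [Fintype κ] [Fintype τ]

/-- A density matrix: the state of a quantum system with basis `ι`. -/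
structure IsDensityMatrix (ρ : Matrix ι ι ℂ) : Prop where
  posSemidef : ρ.PosSemidef
  trace_eq_one : ρ.trace = 1

namespace IsDensityMatrix

variable {A : Matrix ι ι ℂ} {B : Matrix κ κ ℂ}

lemma isHermitian (hA : IsDensityMatrix A) : A.IsHermitian := hA.posSemidef.isHermitian

lemma sum_smul {w : τ → ℝ} {ρ : τ → Matrix ι ι ℂ} (hw : w ∈ stdSimplex ℝ τ)
    (hρ : ∀ i, IsDensityMatrix (ρ i)) : IsDensityMatrix (∑ i, w i • ρ i) where
  posSemidef := posSemidef_sum _ fun i _ ↦ (hρ i).posSemidef.smul (hw.1 i)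
  trace_eq_one := by
    simp only [trace_sum, trace_smul, (hρ _).trace_eq_one, ← Finset.sum_smul, hw.2, one_smul]

lemma vecMulVec_star {ψ : ι → ℂ} (hψ : star ψ ⬝ᵥ ψ = 1) :
    IsDensityMatrix (vecMulVec ψ (star ψ)) where
  posSemidef := posSemidef_vecMulVec_self_star ψ
  trace_eq_one := by rw [trace_vecMulVec, dotProduct_comm, hψ]

protected lemma ptrace1 {ρ : Matrix (ι × κ) (ι × κ) ℂ} (hρ : IsDensityMatrix ρ) :
    IsDensityMatrix (ptrace1 ρ) where
  posSemidef := by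
    have h_sum : ptrace1 ρ = ∑ a, ρ.submatrix (Prod.mk a) (Prod.mk a) := by
      ext u v; simp [ptrace1, Matrix.sum_apply]
    exact h_sum ▸ posSemidef_sum _ fun a _ ↦ hρ.posSemidef.submatrix _
  trace_eq_one := by
    rw [← hρ.trace_eq_one]
    simpa only [trace, diag, ptrace1, Fintype.sum_prod_type] using Finset.sum_comm

protected lemma ptrace2 {ρ : Matrix (ι × κ) (ι × κ) ℂ} (hρ : IsDensityMatrix ρ) :
    IsDensityMatrix (ptrace2 ρ) where
  posSemidef := by
    have h_sum : ptrace2 ρ = ∑ j, ρ.submatrix (·, j) (·, j) := by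
      ext a b; simp [ptrace2, Matrix.sum_apply]
    exact h_sum ▸ posSemidef_sum _ fun j _ ↦ hρ.posSemidef.submatrix _
  trace_eq_one := by
    rw [← hρ.trace_eq_one]
    simp only [trace, diag, ptrace2, Fintype.sum_prod_type]

variable [DecidableEq ι] [DecidableEq κ]

lemma sum_eigenvalues (hA : IsDensityMatrix A) : ∑ i, hA.isHermitian.eigenvalues i = 1 := by
  rw [sum_eigenvalues_eq_re_trace, hA.trace_eq_one, Complex.one_re]

lemma entropy2_nonneg (hA : IsDensityMatrix A) : 0 ≤ entropy2 A := by
  have h_nonneg := hA.posSemidef.eigenvalues_nonneg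
  have h_le_one (i : ι) : hA.isHermitian.eigenvalues i ≤ 1 :=
    hA.sum_eigenvalues ▸ Finset.single_le_sum (fun j _ ↦ h_nonneg j) (Finset.mem_univ i)
  rw [entropy2_eq_sum_negMulLog hA.isHermitian]
  exact div_nonneg
    (Finset.sum_nonneg fun i _ ↦ Real.negMulLog_nonneg (h_nonneg i) (h_le_one i))
    (Real.log_nonneg one_le_two)

lemma entropy2_le_logb_card (hA : IsDensityMatrix A) :
    entropy2 A ≤ Real.logb 2 (Fintype.card ι) := by
  have : Nonempty ι := by
    by_contra h
    rw [not_nonempty_iff] at h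
    simpa [trace] using hA.trace_eq_one
  have h_card : (0 : ℝ) < Fintype.card ι := by exact_mod_cast Fintype.card_pos
  have h_jensen := Real.concaveOn_negMulLog.le_map_sum (t := Finset.univ)
    (w := fun _ : ι ↦ (Fintype.card ι : ℝ)⁻¹) (p := hA.isHermitian.eigenvalues)
    (fun _ _ ↦ by positivity) (by simp) fun i _ ↦ hA.posSemidef.eigenvalues_nonneg i
  simp only [smul_eq_mul, ← Finset.mul_sum, hA.sum_eigenvalues, mul_one] at h_jensen
  rw [Real.negMulLog, Real.log_inv, neg_mul_neg] at h_jensen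
  rw [entropy2_eq_sum_negMulLog hA.isHermitian, Real.logb]
  have := Real.log_pos one_lt_two
  gcongr
  exact le_of_mul_le_mul_left h_jensen (inv_pos.2 h_card)

lemma entropy2_directSum (hA : IsDensityMatrix A) (hB : IsDensityMatrix B) (p : ℝ) :
    entropy2 (fromBlocks (p • A) 0 0 ((1 - p) • B)) =
      p * entropy2 A + (1 - p) * entropy2 B + Real.binEntropy p / Real.log 2 := by
  rw [entropy2_fromBlocks (hA.isHermitian.smul (.all p)) (hB.isHermitian.smul (.all _)),
    entropy2_smul hA.isHermitian, entropy2_smul hB.isHermitian, hA.trace_eq_one, hB.trace_eq_one,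
    Real.binEntropy_eq_negMulLog_add_negMulLog_one_sub, Complex.one_re]
  ring

end IsDensityMatrix

end DensityMatrix

section Rates

variable {ι κ τ : Type*} [Fintype ι] [Fintype κ] [DecidableEq κ] [Fintype τ]

/-- The information rate of the ensemble `(w_i, ρ_i)` sent through the channel `N` with
`d`-dimensional entanglement assistance, i.e. the quantity maximised in `Cprod`. -/
def assistedInfo (d : ℕ) (N : Matrix ι ι ℂ → Matrix κ κ ℂ) (w : τ → ℝ)
    (ρ : τ → Matrix (Fin d × ι) (Fin d × ι) ℂ) : ℝ :=
  entropy2 (∑ i, w i • N (ptrace1 (ρ i))) +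
    ∑ i, w i * (entropy2 (ptrace2 (ρ i)) - entropy2 (idTensor d N (ρ i)))

/-- The set of rates of all finite ensembles of density matrices, whose supremum is `Cprod`. -/
def assistedRates (d : ℕ) (N : Matrix ι ι ℂ → Matrix κ κ ℂ) : Set ℝ :=
  {r | ∃ (k : ℕ) (w : Fin k → ℝ) (ρ : Fin k → Matrix (Fin d × ι) (Fin d × ι) ℂ),
    w ∈ stdSimplex ℝ (Fin k) ∧ (∀ i, IsDensityMatrix (ρ i)) ∧ assistedInfo d N w ρ = r}

lemma Cprod_eq_sSup_assistedRates [DecidableEq ι] (d : ℕ) (N : Matrix ι ι ℂ → Matrix κ κ ℂ) :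
    Cprod d N = sSup (assistedRates d N) := by
  refine congrArg sSup (Set.ext fun r ↦ ⟨?_, ?_⟩)
  · rintro ⟨k, w, ρ, hw, hw_sum, hρ, rfl⟩
    exact ⟨k, w, ρ, ⟨hw, hw_sum⟩, fun i ↦ ⟨(hρ i).1, (hρ i).2⟩, rfl⟩
  · rintro ⟨k, w, ρ, hw, hρ, rfl⟩
    exact ⟨k, w, ρ, hw.1, hw.2, fun i ↦ ⟨(hρ i).1, (hρ i).2⟩, rfl⟩

lemma assistedInfo_mem_assistedRates (d : ℕ) (N : Matrix ι ι ℂ → Matrix κ κ ℂ) {w : τ → ℝ}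
    {ρ : τ → Matrix (Fin d × ι) (Fin d × ι) ℂ} (hw : w ∈ stdSimplex ℝ τ)
    (hρ : ∀ i, IsDensityMatrix (ρ i)) : assistedInfo d N w ρ ∈ assistedRates d N := by
  let e := (Fintype.equivFin τ).symm
  refine ⟨Fintype.card τ, w ∘ e, ρ ∘ e, ⟨fun i ↦ hw.1 (e i), ?_⟩, fun i ↦ hρ (e i), ?_⟩
  · exact (e.sum_comp w).trans hw.2
  · exact congrArg₂ (entropy2 · + ·) (e.sum_comp fun i ↦ w i • N (ptrace1 (ρ i)))
      (e.sum_comp fun i ↦ w i * (entropy2 (ptrace2 (ρ i)) - entropy2 (idTensor d N (ρ i))))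

end Rates

section Erasure

variable {n : ℕ} (lam : ℝ)

lemma erasure_eq_reindex (A : Matrix (Fin n) (Fin n) ℂ) :
    erasure n lam A = reindex finSumFinEquiv finSumFinEquiv
      (fromBlocks (lam • A) 0 0 ((1 - lam) • A.trace • (1 : Matrix (Fin 1) (Fin 1) ℂ))) := by
  rw [← Equiv.symm_apply_eq, reindex_symm]
  ext (a | a) (b | b) <;> simp [erasure, Matrix.one_apply, eq_iff_true_of_subsingleton]

lemma erasure_sum_smul {τ : Type*} [Fintype τ] (w : τ → ℝ) (A : τ → Matrix (Fin n) (Fin n) ℂ) :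
    erasure n lam (∑ i, w i • A i) = ∑ i, w i • erasure n lam (A i) := by
  ext a b
  simp only [Matrix.sum_apply, Matrix.smul_apply, erasure, trace_sum, trace_smul]
  split_ifs <;> simp [Finset.mul_sum, mul_left_comm]

lemma entropy2_erasure {A : Matrix (Fin n) (Fin n) ℂ} (hA : IsDensityMatrix A) :
    entropy2 (erasure n lam A) = lam * entropy2 A + Real.binEntropy lam / Real.log 2 := by
  have h_flag : IsDensityMatrix (1 : Matrix (Fin 1) (Fin 1) ℂ) := ⟨.one, by simp⟩
  rw [erasure_eq_reindex, hA.trace_eq_one, one_smul, entropy2_reindex, hA.entropy2_directSum h_flag,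
    entropy2_of_isIdempotentElem isHermitian_one .one, mul_zero, add_zero]
  exact (hA.isHermitian.smul (.all lam)).fromBlocks conjTranspose_zero
    (isHermitian_one.smul (.all _))

/-- Splits `ℂ^d ⊗ ℂ^(n+1)` into the unerased part `ℂ^d ⊗ ℂ^n` and the erased part, a copy of
`ℂ^d`. -/
def prodFinSuccEquiv (d n : ℕ) : (Fin d × Fin n) ⊕ Fin d ≃ Fin d × Fin (n + 1) :=
  ((Equiv.sumCongr (Equiv.refl _) (Equiv.prodUnique (Fin d) (Fin 1)).symm).trans
    (Equiv.prodSumDistrib (Fin d) (Fin n) (Fin 1)).symm).trans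
    (Equiv.prodCongr (Equiv.refl _) finSumFinEquiv)

variable {d : ℕ}

lemma idTensor_erasure_eq_reindex (X : Matrix (Fin d × Fin n) (Fin d × Fin n) ℂ) :
    idTensor d (erasure n lam) X = reindex (prodFinSuccEquiv d n) (prodFinSuccEquiv d n)
      (fromBlocks (lam • X) 0 0 ((1 - lam) • ptrace2 X)) := by
  rw [← Equiv.symm_apply_eq, reindex_symm]
  ext (a | a) (b | b) <;> simp [erasure, idTensor, prodFinSuccEquiv, ptrace2, trace, diag]

lemma entropy2_idTensor_erasure {X : Matrix (Fin d × Fin n) (Fin d × Fin n) ℂ}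
    (hX : IsDensityMatrix X) :
    entropy2 (idTensor d (erasure n lam) X) =
      lam * entropy2 X + (1 - lam) * entropy2 (ptrace2 X) +
        Real.binEntropy lam / Real.log 2 := by
  rw [idTensor_erasure_eq_reindex, entropy2_reindex, hX.entropy2_directSum hX.ptrace2]
  exact (hX.isHermitian.smul (.all lam)).fromBlocks conjTranspose_zero
    (hX.ptrace2.isHermitian.smul (.all _))

lemma assistedInfo_erasure {τ : Type*} [Fintype τ] {w : τ → ℝ}
    {ρ : τ → Matrix (Fin d × Fin n) (Fin d × Fin n) ℂ} (hw : w ∈ stdSimplex ℝ τ)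
    (hρ : ∀ i, IsDensityMatrix (ρ i)) :
    assistedInfo d (erasure n lam) w ρ = lam * assistedInfo d id w ρ := by
  have h_mean : IsDensityMatrix (∑ i, w i • ptrace1 (ρ i)) := .sum_smul hw fun i ↦ (hρ i).ptrace1
  have h_term (i : τ) :
      w i * (entropy2 (ptrace2 (ρ i)) - entropy2 (idTensor d (erasure n lam) (ρ i))) =
        lam * (w i * (entropy2 (ptrace2 (ρ i)) - entropy2 (ρ i))) -
          w i * (Real.binEntropy lam / Real.log 2) := by
    rw [entropy2_idTensor_erasure lam (hρ i)]
    ring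
  have h_id (i : τ) : idTensor d id (ρ i) = ρ i := rfl
  simp only [assistedInfo, ← erasure_sum_smul, entropy2_erasure lam h_mean, h_term, h_id, id,
    Finset.sum_sub_distrib, ← Finset.mul_sum, ← Finset.sum_mul, hw.2]
  ring

open scoped Pointwise in
lemma assistedRates_erasure (n d : ℕ) :
    assistedRates d (erasure n lam) =
      lam • assistedRates d (id : Matrix (Fin n) (Fin n) ℂ → Matrix (Fin n) (Fin n) ℂ) := by
  ext r
  constructor
  · rintro ⟨k, w, ρ, hw, hρ, rfl⟩
    exact ⟨_, ⟨k, w, ρ, hw, hρ, rfl⟩, (assistedInfo_erasure lam hw hρ).symm⟩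
  · rintro ⟨_, ⟨k, w, ρ, hw, hρ, rfl⟩, rfl⟩
    exact ⟨k, w, ρ, hw, hρ, assistedInfo_erasure lam hw hρ⟩

variable {lam} in
lemma Cprod_erasure (hlam : 0 ≤ lam) (n d : ℕ) :
    Cprod d (erasure n lam) =
      lam * Cprod d (id : Matrix (Fin n) (Fin n) ℂ → Matrix (Fin n) (Fin n) ℂ) := by
  rw [Cprod_eq_sSup_assistedRates, Cprod_eq_sSup_assistedRates, assistedRates_erasure,
    Real.sSup_smul_of_nonneg hlam, smul_eq_mul]

end Erasure

section SuperdenseCoding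

lemma assistedInfo_id_le {d : ℕ} {ι τ : Type*} [Fintype ι] [DecidableEq ι] [Fintype τ]
    {w : τ → ℝ} {ρ : τ → Matrix (Fin d × ι) (Fin d × ι) ℂ} (hw : w ∈ stdSimplex ℝ τ)
    (hρ : ∀ i, IsDensityMatrix (ρ i)) :
    assistedInfo d id w ρ ≤ Real.logb 2 (Fintype.card ι) + Real.logb 2 d := by
  have h_mean : IsDensityMatrix (∑ i, w i • ptrace1 (ρ i)) := .sum_smul hw fun i ↦ (hρ i).ptrace1
  have h_term (i : τ) : entropy2 (ptrace2 (ρ i)) - entropy2 (ρ i) ≤ Real.logb 2 d := by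
    have h_upper := (hρ i).ptrace2.entropy2_le_logb_card
    have h_lower := (hρ i).entropy2_nonneg
    rw [Fintype.card_fin] at h_upper
    linarith
  refine add_le_add h_mean.entropy2_le_logb_card ?_
  calc ∑ i, w i * (entropy2 (ptrace2 (ρ i)) - entropy2 (ρ i))
      ≤ ∑ i, w i * Real.logb 2 d :=
        Finset.sum_le_sum fun i _ ↦ mul_le_mul_of_nonneg_left (h_term i) (hw.1 i)
    _ = Real.logb 2 d := by rw [← Finset.sum_mul, hw.2, one_mul]

variable {α G : Type*} [Fintype α] [DecidableEq G] [AddGroup G]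

/-- The maximally entangled vector `|α|^(-1/2) ∑ a, e_a ⊗ e_(f a + g)` on `ℂ^α ⊗ ℂ^G`, which
encodes the message `g` in superdense coding. -/
def shiftedEntangled (f : α → G) (g : G) : α × G → ℂ :=
  fun p ↦ if p.2 = f p.1 + g then (((√(Fintype.card α))⁻¹ : ℝ) : ℂ) else 0

lemma vecMulVec_shiftedEntangled_apply (f : α → G) (g : G) (p q : α × G) :
    vecMulVec (shiftedEntangled f g) (star (shiftedEntangled f g)) p q =
      if p.2 = f p.1 + g ∧ q.2 = f q.1 + g then (Fintype.card α : ℂ)⁻¹ else 0 := by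
  have h_sq : (((√(Fintype.card α))⁻¹ : ℝ) : ℂ) * (((√(Fintype.card α))⁻¹ : ℝ) : ℂ) =
      (Fintype.card α : ℂ)⁻¹ := by
    rw [← Complex.ofReal_mul, ← mul_inv, Real.mul_self_sqrt (Nat.cast_nonneg _)]
    simp
  simp only [vecMulVec_apply, shiftedEntangled, Pi.star_apply]
  split_ifs <;> simp_all

variable [Fintype G]

lemma star_shiftedEntangled_dotProduct_self [Nonempty α] (f : α → G) (g : G) :
    star (shiftedEntangled f g) ⬝ᵥ shiftedEntangled f g = 1 := by
  rw [dotProduct_comm, ← trace_vecMulVec]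
  simp only [trace, diag, vecMulVec_shiftedEntangled_apply, and_self, Fintype.sum_prod_type]
  simp

lemma ptrace2_shiftedEntangled [DecidableEq α] {f : α → G} (hf : f.Injective) (g : G) :
    ptrace2 (vecMulVec (shiftedEntangled f g) (star (shiftedEntangled f g))) =
      (Fintype.card α : ℝ)⁻¹ • (1 : Matrix α α ℂ) := by
  ext a b
  simp only [ptrace2, vecMulVec_shiftedEntangled_apply, ite_and, Matrix.smul_apply,
    Matrix.one_apply]
  simp [hf.eq_iff]

lemma sum_ptrace1_shiftedEntangled [Nonempty α] (f : α → G) :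
    ∑ g, ptrace1 (vecMulVec (shiftedEntangled f g) (star (shiftedEntangled f g))) = 1 := by
  have h_shift (u : G) (a : α) (g : G) : u = f a + g ↔ g = -f a + u := by
    rw [eq_neg_add_iff_add_eq, eq_comm]
  ext u v
  simp only [Matrix.sum_apply, ptrace1, vecMulVec_shiftedEntangled_apply, Matrix.one_apply,
    h_shift, ite_and]
  rw [Finset.sum_comm]
  simp

lemma assistedInfo_id_shiftedEntangled {d : ℕ} [NeZero d] {f : Fin d → G} (hf : f.Injective) :
    assistedInfo d id (fun _ : G ↦ (Fintype.card G : ℝ)⁻¹)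
        (fun g ↦ vecMulVec (shiftedEntangled f g) (star (shiftedEntangled f g))) =
      Real.logb 2 (Fintype.card G) + Real.logb 2 d := by
  have h_assisted := entropy2_inv_card_smul_one (ι := Fin d)
  have h_pure (g : G) : entropy2 (idTensor d id
      (vecMulVec (shiftedEntangled f g) (star (shiftedEntangled f g)))) = 0 :=
    entropy2_vecMulVec_star (star_shiftedEntangled_dotProduct_self f g)
  simp only [assistedInfo, id, ← Finset.smul_sum, sum_ptrace1_shiftedEntangled,
    entropy2_inv_card_smul_one, ptrace2_shiftedEntangled hf, h_assisted, h_pure]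
  simp

lemma isGreatest_assistedRates_id {d : ℕ} [NeZero d] {f : Fin d → G} (hf : f.Injective) :
    IsGreatest (assistedRates d (id : Matrix G G ℂ → Matrix G G ℂ))
      (Real.logb 2 (Fintype.card G) + Real.logb 2 d) := by
  constructor
  · rw [← assistedInfo_id_shiftedEntangled hf]
    refine assistedInfo_mem_assistedRates d id ⟨fun _ ↦ by positivity, by simp⟩ fun g ↦ ?_
    exact .vecMulVec_star (star_shiftedEntangled_dotProduct_self f g)
  · rintro _ ⟨k, w, ρ, hw, hρ, rfl⟩
    exact assistedInfo_id_le hw hρ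

lemma Cprod_id {d : ℕ} [NeZero d] {f : Fin d → G} (hf : f.Injective) :
    Cprod d (id : Matrix G G ℂ → Matrix G G ℂ) = Real.logb 2 (Fintype.card G * d) := by
  rw [Cprod_eq_sSup_assistedRates, (isGreatest_assistedRates_id hf).csSup_eq,
    Real.logb_mul (by simp) (NeZero.ne _)]

end SuperdenseCoding

/-- the product-state `d`-restricted classical capacity of the quantum erasure
channel equals `λ log₂(nd)`. -/
theorem statement12 (n d : ℕ) (hd : 1 ≤ d) (hdn : d ≤ n) (lam : ℝ) (hl0 : 0 ≤ lam)
    (hl1 : lam ≤ 1) :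
    Cprod d (erasure n lam) = lam * Real.logb 2 ((n : ℝ) * d) := by
  have : NeZero d := ⟨by lia⟩
  have : NeZero n := ⟨by lia⟩
  rw [Cprod_erasure hl0, Cprod_id (Fin.castLE_injective hdn), Fintype.card_fin]
end
end

section
/- Let n ≥ 1, k ≥ 1 and 0 ≤ s ≤ k. For every density matrix ρ on (ℂ^n)^{⊗k} = ℂ^{n^k}: (s/k) · S(ρ) ≤ (1/binom(k,s)) · ∑_{A ⊆ {1,…,k}, |A| = s} S(ρ_A), where ρ_A denotes the reduced density matrix obtained from ρ by tracing out all tensor factors with index outside A, and S is the von Neumann entropy with natural logarithm. -/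
noncomputable section

open scoped BigOperators ComplexOrder
open Matrix

/-- The von Neumann entropy (natural logarithm) `S(ρ) = −tr(ρ ln ρ)`, computed via the
eigenvalues (with the convention `0 ln 0 = 0`). -/
def entropyLn {ι : Type*} [Fintype ι] [DecidableEq ι] (ρ : Matrix ι ι ℂ) : ℝ :=
  if h : ρ.IsHermitian then -∑ i, h.eigenvalues i * Real.log (h.eigenvalues i) else 0

/-- The reduced density matrix `ρ_A` of `ρ` on `(ℂ^n)^{⊗k}`, obtained by tracing out all
tensor factors with index outside `A`. -/
def reduced {n k : ℕ} (ρ : Matrix (Fin k → Fin n) (Fin k → Fin n) ℂ) (A : Finset (Fin k)) :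
    Matrix ({ i : Fin k // i ∈ A } → Fin n) ({ i : Fin k // i ∈ A } → Fin n) ℂ :=
  fun u v => ∑ w : { i : Fin k // i ∉ A } → Fin n,
    ρ (fun i => if h : i ∈ A then u ⟨i, h⟩ else w ⟨i, h⟩)
      (fun i => if h : i ∈ A then v ⟨i, h⟩ else w ⟨i, h⟩)

/-! The map `A ↦ S(ρ_A)` is submodular: this is strong subadditivity, a consequence of monotonicity
of the relative entropy under restriction to a subalgebra. With the relative modular operator `Δ`,
the function `t ↦ ⟨ρ^{1/2}, ln (t + Δ) ρ^{1/2}⟩` equals `-S(ρ‖σ)` at `t = 0` and is asymptotic to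
`(tr ρ) ln t` at infinity. Its derivative `⟨ρ^{1/2}, (t + Δ)⁻¹ ρ^{1/2}⟩` is the maximum of a concave
quadratic functional of a matrix, so restriction can only decrease it; since both functions agree
at infinity, restriction can only increase the value at `t = 0`.

A submodular set function `F` with `F ∅ = 0` dominates an additive one that agrees with it on the
full set. Averaged over the `s`-subsets, the additive function gives exactly `(s / k) F(univ)`.
-/

open scoped Kronecker Topology
open Filter

section Spectral

variable {m : Type*} [Fintype m] [DecidableEq m]

lemma cfc_eq_eigenvectorUnitary_mul_diagonal {A : Matrix m m ℂ} (hA : A.IsHermitian) (f : ℝ → ℝ) :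
    cfc f A = (hA.eigenvectorUnitary : Matrix m m ℂ) *
      diagonal (fun i => (f (hA.eigenvalues i) : ℂ)) *
        (hA.eigenvectorUnitary : Matrix m m ℂ)ᴴ := by
  rw [hA.cfc_eq]
  rfl

lemma trace_mul_eq_sum_eigenvalues {A : Matrix m m ℂ} (hA : A.IsHermitian) (X : Matrix m m ℂ) :
    trace (A * X) = ∑ i, (hA.eigenvalues i : ℂ) * ((hA.eigenvectorUnitary : Matrix m m ℂ)ᴴ * X *
      (hA.eigenvectorUnitary : Matrix m m ℂ)) i i := by
  have hdiag := cfc_eq_eigenvectorUnitary_mul_diagonal hA id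
  rw [cfc_id ℝ A hA.isSelfAdjoint] at hdiag
  rw [congrArg (trace <| · * X) hdiag, Matrix.mul_assoc, Matrix.mul_assoc, trace_mul_comm,
    Matrix.mul_assoc]
  simp only [trace, diag_apply, diagonal_mul, id]

/-- The squared moduli `|⟨uᵢ, vⱼ⟩|²` of the inner products of the eigenvectors `uᵢ` of `A` with the
eigenvectors `vⱼ` of `B`. They turn traces of products of functions of `A` and of `B` into double
sums over eigenvalues. -/
def eigenOverlap {A B : Matrix m m ℂ} (hA : A.IsHermitian) (hB : B.IsHermitian) (i j : m) : ℝ :=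
  Complex.normSq
    (((hA.eigenvectorUnitary : Matrix m m ℂ)ᴴ * (hB.eigenvectorUnitary : Matrix m m ℂ)) i j)

lemma re_trace_cfc_mul_cfc {A B : Matrix m m ℂ} (hA : A.IsHermitian) (hB : B.IsHermitian)
    (f g : ℝ → ℝ) :
    (trace (cfc f A * cfc g B)).re =
      ∑ i, ∑ j, f (hA.eigenvalues i) * g (hB.eigenvalues j) * eigenOverlap hA hB i j := by
  set W : Matrix m m ℂ :=
    (hA.eigenvectorUnitary : Matrix m m ℂ)ᴴ * (hB.eigenvectorUnitary : Matrix m m ℂ) with hW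
  have hcycle : trace (cfc f A * cfc g B) =
      trace (diagonal (fun i => (f (hA.eigenvalues i) : ℂ)) * W *
        diagonal (fun j => (g (hB.eigenvalues j) : ℂ)) * Wᴴ) := by
    rw [cfc_eq_eigenvectorUnitary_mul_diagonal hA, cfc_eq_eigenvectorUnitary_mul_diagonal hB, hW]
    simp only [Matrix.mul_assoc]
    rw [trace_mul_comm]
    simp only [conjTranspose_mul, conjTranspose_conjTranspose, Matrix.mul_assoc]
  rw [hcycle]
  simp only [trace, diag_apply, mul_apply (N := Wᴴ), mul_diagonal, diagonal_mul,
    Complex.re_sum]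
  refine Finset.sum_congr rfl fun i _ => Finset.sum_congr rfl fun j _ => ?_
  have hterm (a b z : ℂ) : a * z * b * star z = a * b * Complex.normSq z := by
    rw [← Complex.mul_conj, RCLike.star_def]
    ring
  rw [conjTranspose_apply, hterm, ← Complex.ofReal_mul, ← Complex.ofReal_mul, Complex.ofReal_re]
  rfl

lemma trace_cfc {A : Matrix m m ℂ} (hA : A.IsHermitian) (f : ℝ → ℝ) :
    trace (cfc f A) = ∑ i, (f (hA.eigenvalues i) : ℂ) := by
  have hU : (hA.eigenvectorUnitary : Matrix m m ℂ)ᴴ * (hA.eigenvectorUnitary : Matrix m m ℂ) = 1 :=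
    Unitary.coe_star_mul_self _
  rw [cfc_eq_eigenvectorUnitary_mul_diagonal hA, trace_mul_cycle, hU, Matrix.one_mul,
    trace_diagonal]

lemma sum_eigenOverlap {A B : Matrix m m ℂ} (hA : A.IsHermitian) (hB : B.IsHermitian)
    (f : ℝ → ℝ) :
    ∑ i, ∑ j, f (hA.eigenvalues i) * eigenOverlap hA hB i j = ∑ i, f (hA.eigenvalues i) := by
  have h := re_trace_cfc_mul_cfc hA hB f 1
  rw [cfc_one ℝ B hB.isSelfAdjoint, mul_one, trace_cfc hA, ← Complex.ofReal_sum,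
    Complex.ofReal_re] at h
  simpa only [Pi.one_apply, mul_one] using h.symm

lemma entropyLn_eq_sum_negMulLog {A : Matrix m m ℂ} (hA : A.IsHermitian) :
    entropyLn A = ∑ i, Real.negMulLog (hA.eigenvalues i) := by
  simp only [entropyLn, dif_pos hA, Real.negMulLog, neg_mul, Finset.sum_neg_distrib]

lemma entropyLn_eq_re_trace_cfc {A : Matrix m m ℂ} (hA : A.IsHermitian) :
    entropyLn A = (trace (cfc Real.negMulLog A)).re := by
  rw [entropyLn_eq_sum_negMulLog hA, trace_cfc hA, ← Complex.ofReal_sum, Complex.ofReal_re]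

lemma entropyLn_eq_neg_re_trace_mul_cfc_log {A : Matrix m m ℂ} (hA : A.IsHermitian) :
    entropyLn A = -(trace (A * cfc Real.log A)).re := by
  have hlog : A * cfc Real.log A = -cfc Real.negMulLog A := by
    nth_rewrite 1 [← cfc_id ℝ A hA.isSelfAdjoint]
    rw [← cfc_mul id Real.log A (by fun_prop) (A.finite_real_spectrum.continuousOn _), ← cfc_neg]
    exact cfc_congr fun x _ => by simp only [id, Real.negMulLog, neg_mul, neg_neg]
  rw [entropyLn_eq_re_trace_cfc hA, hlog, trace_neg, Complex.neg_re, neg_neg]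

lemma entropyLn_eq_sum_roots_charpoly {A : Matrix m m ℂ} (hA : A.IsHermitian) :
    entropyLn A = (A.charpoly.roots.map fun z => Real.negMulLog z.re).sum := by
  rw [entropyLn_eq_sum_negMulLog hA, hA.roots_charpoly_eq_eigenvalues, Multiset.map_map]
  rfl

lemma entropyLn_submatrix_equiv {l : Type*} [Fintype l] [DecidableEq l] {A : Matrix m m ℂ}
    (hA : A.IsHermitian) (e : l ≃ m) : entropyLn (A.submatrix e e) = entropyLn A := by
  rw [entropyLn_eq_sum_roots_charpoly (hA.submatrix e), entropyLn_eq_sum_roots_charpoly hA,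
    ← charpoly_reindex e.symm A, reindex_apply, Equiv.symm_symm]

lemma entropyLn_of_unique [Unique m] {A : Matrix m m ℂ} (hA : A.IsHermitian) :
    entropyLn A = Real.negMulLog (trace A).re := by
  rw [entropyLn_eq_sum_negMulLog hA, hA.trace_eq_sum_eigenvalues, Fintype.sum_unique,
    Fintype.sum_unique, RCLike.ofReal_eq_complex_ofReal, Complex.ofReal_re]

lemma tendsto_entropyLn_add_smul_one {A : Matrix m m ℂ} (hA : A.IsHermitian) :
    Tendsto (fun x : ℝ => entropyLn (A + (x : ℂ) • 1)) (𝓝 0) (𝓝 (entropyLn A)) := by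
  have hshift (x : ℝ) : A + (x : ℂ) • 1 = cfc (fun y => y + x) A := by
    rw [cfc_add_const x (fun y => y) A (by fun_prop) hA.isSelfAdjoint,
      cfc_id' ℝ A hA.isSelfAdjoint, Algebra.algebraMap_eq_smul_one, Complex.coe_smul]
  have hentropy (x : ℝ) : entropyLn (A + (x : ℂ) • 1) =
      ∑ i, Real.negMulLog (hA.eigenvalues i + x) := by
    have hAx : (A + (x : ℂ) • 1).IsHermitian := hshift x ▸ cfc_predicate _ A
    rw [entropyLn_eq_re_trace_cfc hAx, hshift,
      ← cfc_comp' Real.negMulLog (fun y => y + x) A Real.continuous_negMulLog.continuousOn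
        (by fun_prop) hA.isSelfAdjoint, trace_cfc hA, ← Complex.ofReal_sum, Complex.ofReal_re]
  have hcont : Continuous fun x : ℝ => ∑ i, Real.negMulLog (hA.eigenvalues i + x) := by
    fun_prop
  simp only [hentropy]
  rw [entropyLn_eq_sum_negMulLog hA]
  simpa only [add_zero] using hcont.tendsto 0

end Spectral

section RelativeEntropy

variable {m : Type*} [Fintype m] [DecidableEq m] {ρ σ : Matrix m m ℂ}

/-- Umegaki's relative entropy `S(ρ‖σ) = tr ρ (ln ρ - ln σ)`. Since `Real.log 0 = 0`, it has its
usual meaning only when the kernel of `σ` is contained in that of `ρ`; below `σ` is positive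
definite. -/
def relEntropy (ρ σ : Matrix m m ℂ) : ℝ :=
  (trace (ρ * (cfc Real.log ρ - cfc Real.log σ))).re

/-- The function `t ↦ ⟨ρ^{1/2}, ln (t + Δ) ρ^{1/2}⟩` of the relative modular operator
`Δ X = σ X ρ⁻¹`, written in eigenbases of `ρ` and `σ`. It interpolates between `-S(ρ‖σ)` at `t = 0`
and `(tr ρ) ln t` at infinity. -/
def modularLog (hρ : ρ.IsHermitian) (hσ : σ.IsHermitian) (t : ℝ) : ℝ :=
  ∑ i, ∑ j, hρ.eigenvalues i * eigenOverlap hρ hσ i j *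
    Real.log (t + hσ.eigenvalues j / hρ.eigenvalues i)

/-- The function `t ↦ ⟨ρ^{1/2}, (t + Δ)⁻¹ ρ^{1/2}⟩` of the relative modular operator
`Δ X = σ X ρ⁻¹`, written in eigenbases of `ρ` and `σ`. -/
def modularResolvent (hρ : ρ.IsHermitian) (hσ : σ.IsHermitian) (t : ℝ) : ℝ :=
  ∑ i, ∑ j, hρ.eigenvalues i * eigenOverlap hρ hσ i j *
    (t + hσ.eigenvalues j / hρ.eigenvalues i)⁻¹

/-- The concave quadratic functional `X ↦ Re (2 tr ρX - t tr ρX*X - tr σXX*)`, whose maximum is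
`modularResolvent`. -/
def modularQuadratic (ρ σ : Matrix m m ℂ) (t : ℝ) (X : Matrix m m ℂ) : ℝ :=
  2 * (trace (ρ * X)).re - t * (trace (ρ * (Xᴴ * X))).re - (trace (σ * (X * Xᴴ))).re

lemma two_mul_re_mul_sub_mul_normSq {c : ℝ} (hc : c ≠ 0) (z y : ℂ) :
    2 * (z * y).re - c * Complex.normSq y =
      Complex.normSq z / c - c * Complex.normSq (y - star z / c) := by
  simp only [Complex.normSq_apply, Complex.mul_re, Complex.sub_re, Complex.sub_im, RCLike.star_def,
    Complex.div_ofReal_re, Complex.div_ofReal_im, Complex.conj_re, Complex.conj_im]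
  field_simp
  ring

lemma modularQuadratic_eigenbasis (hρ : ρ.IsHermitian) (hσ : σ.IsHermitian) (t : ℝ)
    (Y : Matrix m m ℂ) :
    modularQuadratic ρ σ t ((hσ.eigenvectorUnitary : Matrix m m ℂ) * Y *
        (hρ.eigenvectorUnitary : Matrix m m ℂ)ᴴ) =
      ∑ i, ∑ j, (2 * (hρ.eigenvalues i * ((hρ.eigenvectorUnitary : Matrix m m ℂ)ᴴ *
          (hσ.eigenvectorUnitary : Matrix m m ℂ)) i j * Y j i).re -
        (t * hρ.eigenvalues i + hσ.eigenvalues j) * Complex.normSq (Y j i)) := by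
  set U : Matrix m m ℂ := (hρ.eigenvectorUnitary : Matrix m m ℂ) with hU
  set V : Matrix m m ℂ := (hσ.eigenvectorUnitary : Matrix m m ℂ) with hV
  have hUU : Uᴴ * U = 1 := Unitary.coe_star_mul_self _
  have hVV : Vᴴ * V = 1 := Unitary.coe_star_mul_self _
  have hlinear : trace (ρ * (V * Y * Uᴴ)) =
      ∑ i, ∑ j, (hρ.eigenvalues i : ℂ) * ((Uᴴ * V) i j * Y j i) := by
    have hX : Uᴴ * (V * Y * Uᴴ) * U = Uᴴ * V * Y := by
      rw [Matrix.mul_assoc, Matrix.mul_assoc, hUU, Matrix.mul_one, Matrix.mul_assoc]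
    simp only [trace_mul_eq_sum_eigenvalues hρ, ← hU, hX, mul_apply (N := Y), Finset.mul_sum]
  have hdomain : trace (ρ * ((V * Y * Uᴴ)ᴴ * (V * Y * Uᴴ))) =
      ∑ i, ∑ j, (hρ.eigenvalues i : ℂ) * Complex.normSq (Y j i) := by
    have hX : Uᴴ * ((V * Y * Uᴴ)ᴴ * (V * Y * Uᴴ)) * U = Yᴴ * Y := by
      simp only [conjTranspose_mul, conjTranspose_conjTranspose, Matrix.mul_assoc, hUU,
        Matrix.mul_one]
      rw [← Matrix.mul_assoc Uᴴ U, hUU, Matrix.one_mul, ← Matrix.mul_assoc Vᴴ V, hVV,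
        Matrix.one_mul]
    simp only [trace_mul_eq_sum_eigenvalues hρ, ← hU, hX, mul_apply (N := Y), Finset.mul_sum,
      conjTranspose_apply, RCLike.star_def, ← Complex.normSq_eq_conj_mul_self]
  have hrange : trace (σ * ((V * Y * Uᴴ) * (V * Y * Uᴴ)ᴴ)) =
      ∑ i, ∑ j, (hσ.eigenvalues j : ℂ) * Complex.normSq (Y j i) := by
    have hX : Vᴴ * ((V * Y * Uᴴ) * (V * Y * Uᴴ)ᴴ) * V = Y * Yᴴ := by
      simp only [conjTranspose_mul, conjTranspose_conjTranspose, Matrix.mul_assoc, hVV,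
        Matrix.mul_one]
      rw [← Matrix.mul_assoc Vᴴ V, hVV, Matrix.one_mul, ← Matrix.mul_assoc Uᴴ U, hUU,
        Matrix.one_mul]
    rw [Finset.sum_comm]
    simp only [trace_mul_eq_sum_eigenvalues hσ, ← hV, hX, mul_apply (N := Yᴴ), Finset.mul_sum,
      conjTranspose_apply, RCLike.star_def, Complex.mul_conj]
  rw [modularQuadratic, hlinear, hdomain, hrange]
  simp only [Complex.re_sum, ← Complex.ofReal_mul, Complex.ofReal_re, Finset.mul_sum,
    ← Finset.sum_sub_distrib, add_mul, mul_assoc, ← sub_sub]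

lemma modularResolvent_eq_sum_normSq_div (hρ : ρ.PosDef) (hσ : σ.IsHermitian) (t : ℝ) :
    modularResolvent hρ.isHermitian hσ t = ∑ i, ∑ j,
      Complex.normSq (hρ.isHermitian.eigenvalues i *
        ((hρ.isHermitian.eigenvectorUnitary : Matrix m m ℂ)ᴴ *
          (hσ.eigenvectorUnitary : Matrix m m ℂ)) i j) /
        (t * hρ.isHermitian.eigenvalues i + hσ.eigenvalues j) := by
  refine Finset.sum_congr rfl fun i _ => Finset.sum_congr rfl fun j _ => ?_
  rw [map_mul, Complex.normSq_ofReal, add_div' _ _ _ (hρ.eigenvalues_pos i).ne', inv_div,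
    mul_div_assoc', mul_right_comm]
  rfl

lemma isGreatest_modularQuadratic (hρ : ρ.PosDef) (hσ : σ.PosDef) {t : ℝ} (ht : 0 ≤ t) :
    IsGreatest (Set.range (modularQuadratic ρ σ t))
      (modularResolvent hρ.isHermitian hσ.isHermitian t) := by
  set U : Matrix m m ℂ := (hρ.isHermitian.eigenvectorUnitary : Matrix m m ℂ)
  set V : Matrix m m ℂ := (hσ.isHermitian.eigenvectorUnitary : Matrix m m ℂ)
  have hUU : U * Uᴴ = 1 := Unitary.coe_mul_star_self _
  have hVV : V * Vᴴ = 1 := Unitary.coe_mul_star_self _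
  set c : m → m → ℝ := fun i j =>
    t * hρ.isHermitian.eigenvalues i + hσ.isHermitian.eigenvalues j
  have hc (i j : m) : 0 < c i j :=
    add_pos_of_nonneg_of_pos (mul_nonneg ht (hρ.eigenvalues_pos i).le) (hσ.eigenvalues_pos j)
  rw [modularResolvent_eq_sum_normSq_div hρ hσ.isHermitian t]
  constructor
  · refine ⟨V * (of fun j i => star (hρ.isHermitian.eigenvalues i * (Uᴴ * V) i j) / c i j) * Uᴴ, ?_⟩
    rw [modularQuadratic_eigenbasis]
    refine Finset.sum_congr rfl fun i _ => Finset.sum_congr rfl fun j _ => ?_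
    rw [two_mul_re_mul_sub_mul_normSq (hc i j).ne', of_apply, sub_self, map_zero, mul_zero,
      sub_zero]
  · rintro _ ⟨X, rfl⟩
    have hX : X = V * (Vᴴ * X * U) * Uᴴ := by
      rw [Matrix.mul_assoc, Matrix.mul_assoc, Matrix.mul_assoc, hUU, Matrix.mul_one,
        ← Matrix.mul_assoc, hVV, Matrix.one_mul]
    rw [hX, modularQuadratic_eigenbasis]
    refine Finset.sum_le_sum fun i _ => Finset.sum_le_sum fun j _ => ?_
    rw [two_mul_re_mul_sub_mul_normSq (hc i j).ne']
    exact sub_le_self _ (mul_nonneg (hc i j).le (Complex.normSq_nonneg _))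

lemma modularResolvent_le_of_starAlgHom {l : Type*} [Fintype l] [DecidableEq l]
    {ρ' σ' : Matrix l l ℂ} (hρ : ρ.PosDef) (hσ : σ.PosDef) (hρ' : ρ'.PosDef) (hσ' : σ'.PosDef)
    (φ : Matrix l l ℂ →⋆ₐ[ℂ] Matrix m m ℂ) (hφρ : ∀ X, trace (ρ * φ X) = trace (ρ' * X))
    (hφσ : ∀ X, trace (σ * φ X) = trace (σ' * X)) {t : ℝ} (ht : 0 ≤ t) :
    modularResolvent hρ'.isHermitian hσ'.isHermitian t ≤
      modularResolvent hρ.isHermitian hσ.isHermitian t := by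
  obtain ⟨X, hX⟩ := (isGreatest_modularQuadratic hρ' hσ' ht).1
  have hquad : modularQuadratic ρ σ t (φ X) = modularQuadratic ρ' σ' t X := by
    simp only [modularQuadratic, ← star_eq_conjTranspose, ← map_star, ← map_mul, hφρ, hφσ]
  exact (isGreatest_modularQuadratic hρ hσ ht).2 ⟨φ X, hquad.trans hX⟩

lemma hasDerivAt_modularLog (hρ : ρ.PosDef) (hσ : σ.PosDef) {t : ℝ} (ht : 0 ≤ t) :
    HasDerivAt (modularLog hρ.isHermitian hσ.isHermitian)
      (modularResolvent hρ.isHermitian hσ.isHermitian t) t := by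
  refine HasDerivAt.fun_sum fun i _ => HasDerivAt.fun_sum fun j _ => ?_
  have hpos : 0 < t + hσ.isHermitian.eigenvalues j / hρ.isHermitian.eigenvalues i :=
    add_pos_of_nonneg_of_pos ht (div_pos (hσ.eigenvalues_pos j) (hρ.eigenvalues_pos i))
  simpa only [one_div] using (((hasDerivAt_id' t).add_const _).log hpos.ne').const_mul _

lemma relEntropy_eq_neg_entropyLn_sub (hρ : ρ.IsHermitian) (σ : Matrix m m ℂ) :
    relEntropy ρ σ = -entropyLn ρ - (trace (ρ * cfc Real.log σ)).re := by
  rw [relEntropy, mul_sub, trace_sub, Complex.sub_re, entropyLn_eq_neg_re_trace_mul_cfc_log hρ,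
    neg_neg]

lemma modularLog_zero (hρ : ρ.PosDef) (hσ : σ.PosDef) :
    modularLog hρ.isHermitian hσ.isHermitian 0 = -relEntropy ρ σ := by
  have hcross : (trace (ρ * cfc Real.log σ)).re = ∑ i, ∑ j, hρ.isHermitian.eigenvalues i *
      Real.log (hσ.isHermitian.eigenvalues j) * eigenOverlap hρ.isHermitian hσ.isHermitian i j := by
    nth_rewrite 1 [← cfc_id ℝ ρ hρ.isHermitian.isSelfAdjoint]
    exact re_trace_cfc_mul_cfc hρ.isHermitian hσ.isHermitian id Real.log
  rw [relEntropy_eq_neg_entropyLn_sub hρ.isHermitian, entropyLn_eq_sum_negMulLog hρ.isHermitian,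
    ← sum_eigenOverlap hρ.isHermitian hσ.isHermitian, hcross, neg_sub', neg_neg, sub_neg_eq_add]
  simp only [modularLog, ← Finset.sum_add_distrib, zero_add]
  refine Finset.sum_congr rfl fun i _ => Finset.sum_congr rfl fun j _ => ?_
  rw [Real.log_div (hσ.eigenvalues_pos j).ne' (hρ.eigenvalues_pos i).ne', Real.negMulLog]
  ring

lemma tendsto_modularLog_sub_log (hρ : ρ.IsHermitian) (hσ : σ.IsHermitian) :
    Tendsto (fun t => modularLog hρ hσ t - (trace ρ).re * Real.log t) atTop (𝓝 0) := by
  have htrace : (trace ρ).re = ∑ i, ∑ j, hρ.eigenvalues i * eigenOverlap hρ hσ i j := by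
    rw [sum_eigenOverlap hρ hσ fun x => x, hρ.trace_eq_sum_eigenvalues]
    simp only [← Complex.ofReal_sum, Complex.ofReal_re, Complex.coe_algebraMap]
  simp only [htrace, modularLog, Finset.sum_mul, ← Finset.sum_sub_distrib, ← mul_sub]
  simpa only [mul_zero, Finset.sum_const_zero] using
    tendsto_finsetSum Finset.univ fun i _ => tendsto_finsetSum Finset.univ fun j _ =>
      (Real.tendsto_log_comp_add_sub_log (hσ.eigenvalues j / hρ.eigenvalues i)).const_mul
        (hρ.eigenvalues i * eigenOverlap hρ hσ i j)

lemma relEntropy_le_of_starAlgHom {l : Type*} [Fintype l] [DecidableEq l]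
    {ρ' σ' : Matrix l l ℂ} (hρ : ρ.PosDef) (hσ : σ.PosDef) (hρ' : ρ'.PosDef) (hσ' : σ'.PosDef)
    (φ : Matrix l l ℂ →⋆ₐ[ℂ] Matrix m m ℂ) (hφρ : ∀ X, trace (ρ * φ X) = trace (ρ' * X))
    (hφσ : ∀ X, trace (σ * φ X) = trace (σ' * X)) :
    relEntropy ρ' σ' ≤ relEntropy ρ σ := by
  set D : ℝ → ℝ := fun t => modularLog hρ.isHermitian hσ.isHermitian t -
    modularLog hρ'.isHermitian hσ'.isHermitian t
  have hderiv {t : ℝ} (ht : 0 ≤ t) : HasDerivAt D _ t :=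
    (hasDerivAt_modularLog hρ hσ ht).fun_sub (hasDerivAt_modularLog hρ' hσ' ht)
  have hmono : MonotoneOn D (Set.Ici 0) := by
    refine monotoneOn_of_deriv_nonneg (convex_Ici 0)
      (fun t ht => (hderiv ht).continuousAt.continuousWithinAt)
      (fun t ht => (hderiv (interior_subset ht)).differentiableAt.differentiableWithinAt)
      fun t ht => ?_
    rw [(hderiv (interior_subset ht)).deriv]
    exact sub_nonneg.2
      (modularResolvent_le_of_starAlgHom hρ hσ hρ' hσ' φ hφρ hφσ (interior_subset ht))
  have htrace : trace ρ = trace ρ' := by simpa only [map_one, mul_one] using hφρ 1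
  have hlim : Tendsto D atTop (𝓝 0) := by
    have := (tendsto_modularLog_sub_log hρ.isHermitian hσ.isHermitian).sub
      (tendsto_modularLog_sub_log hρ'.isHermitian hσ'.isHermitian)
    simpa only [htrace, sub_sub_sub_cancel_right, sub_zero] using this
  have hzero : D 0 ≤ 0 := ge_of_tendsto hlim <| (eventually_ge_atTop 0).mono fun t ht =>
    hmono Set.self_mem_Ici ht ht
  simp only [D, modularLog_zero hρ hσ, modularLog_zero hρ' hσ'] at hzero
  linarith

end RelativeEntropy

section PartialTrace

variable {Ω α β γ : Type*}

/-- The partial trace over the second factor of a matrix whose index type is identified with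
`α × γ` by `e`. -/
def partialTrace [Fintype γ] (e : Ω ≃ α × γ) (M : Matrix Ω Ω ℂ) : Matrix α α ℂ :=
  of fun u v => ∑ w, M (e.symm (u, w)) (e.symm (v, w))

/-- The embedding `X ↦ X ⊗ 1` of matrices over the first factor, along an identification `e` of the
index type with `α × γ`. It is dual to `partialTrace` under the trace pairing. -/
def ampliation [Fintype Ω] [DecidableEq Ω] [Fintype α] [DecidableEq α] [Fintype γ] [DecidableEq γ]
    (e : Ω ≃ α × γ) : Matrix α α ℂ →⋆ₐ[ℂ] Matrix Ω Ω ℂ where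
  toFun X := (X ⊗ₖ (1 : Matrix γ γ ℂ)).submatrix e e
  map_one' := by rw [one_kronecker_one, submatrix_one_equiv]
  map_mul' X Y := by rw [submatrix_mul_equiv, ← mul_kronecker_mul, Matrix.one_mul]
  map_zero' := by rw [zero_kronecker, submatrix_zero]; rfl
  map_add' X Y := by rw [add_kronecker, submatrix_add]; rfl
  commutes' z := by
    simp only [Algebra.algebraMap_eq_smul_one, smul_kronecker, one_kronecker_one, submatrix_smul,
      Pi.smul_apply, submatrix_one_equiv]
  map_star' X := by
    simp only [star_eq_conjTranspose, conjTranspose_submatrix, conjTranspose_kronecker,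
      conjTranspose_one]

lemma partialTrace_eq_sum_submatrix [Fintype γ] (e : Ω ≃ α × γ) (M : Matrix Ω Ω ℂ) :
    partialTrace e M =
      ∑ w, M.submatrix (fun u => e.symm (u, w)) (fun u => e.symm (u, w)) := by
  ext u v
  simp only [partialTrace, of_apply, Matrix.sum_apply, submatrix_apply]

lemma isHermitian_partialTrace [Fintype γ] (e : Ω ≃ α × γ) {M : Matrix Ω Ω ℂ}
    (hM : M.IsHermitian) : (partialTrace e M).IsHermitian := by
  rw [partialTrace_eq_sum_submatrix]
  exact isSelfAdjoint_sum _ fun w _ => hM.submatrix _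

lemma posDef_partialTrace [Fintype γ] [Nonempty γ] (e : Ω ≃ α × γ) {M : Matrix Ω Ω ℂ}
    (hM : M.PosDef) : (partialTrace e M).PosDef := by
  rw [partialTrace_eq_sum_submatrix]
  exact posDef_sum Finset.univ_nonempty fun w _ =>
    hM.submatrix (e.symm.injective.comp (Prod.mk_left_injective w))

lemma partialTrace_add_smul_one [Fintype γ] [DecidableEq Ω] [DecidableEq α] (e : Ω ≃ α × γ)
    (M : Matrix Ω Ω ℂ) (x : ℂ) :
    partialTrace e (M + x • 1) = partialTrace e M + (Fintype.card γ * x) • 1 := by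
  ext u v
  simp [partialTrace, one_apply, Finset.sum_add_distrib]

lemma trace_partialTrace [Fintype Ω] [Fintype α] [Fintype γ] (e : Ω ≃ α × γ) (M : Matrix Ω Ω ℂ) :
    trace (partialTrace e M) = trace M := by
  simp only [trace, diag_apply, partialTrace, of_apply, ← Fintype.sum_prod_type']
  exact e.symm.sum_comp fun x => M x x

section Ampliation

variable [Fintype Ω] [DecidableEq Ω] [Fintype α] [DecidableEq α] [Fintype γ] [DecidableEq γ]

lemma ampliation_apply (e : Ω ≃ α × γ) (X : Matrix α α ℂ) (x y : Ω) :
    ampliation e X x y = if (e x).2 = (e y).2 then X (e x).1 (e y).1 else 0 :=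
  mul_boole _ _

lemma trace_mul_ampliation (e : Ω ≃ α × γ) (M : Matrix Ω Ω ℂ) (X : Matrix α α ℂ) :
    trace (M * ampliation e X) = trace (partialTrace e M * X) := by
  have hX : partialTrace e (M * ampliation e X) = partialTrace e M * X := by
    ext u v
    simp only [partialTrace, mul_apply, of_apply, ampliation_apply, ← e.symm.sum_comp,
      Fintype.sum_prod_type, Equiv.apply_symm_apply, mul_ite, mul_zero, Finset.sum_ite_eq',
      Finset.mem_univ, if_true, Finset.sum_mul]
    exact Finset.sum_comm
  rw [← trace_partialTrace e, hX]

lemma posDef_ampliation (e : Ω ≃ α × γ) {X : Matrix α α ℂ} (hX : X.PosDef) :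
    (ampliation e X).PosDef :=
  (hX.kronecker PosDef.one).submatrix e.injective

lemma cfc_ampliation (e : Ω ≃ α × γ) {X : Matrix α α ℂ} (hX : X.IsHermitian) (f : ℝ → ℝ) :
    cfc f (ampliation e X) = ampliation e (cfc f X) :=
  (StarAlgHomClass.map_cfc (ampliation e) f X (X.finite_real_spectrum.continuousOn f)
    (LinearMap.continuous_of_finiteDimensional (ampliation e).toAlgHom.toLinearMap)
    hX.isSelfAdjoint (hX.isSelfAdjoint.map _)).symm

lemma relEntropy_ampliation_partialTrace (e : Ω ≃ α × γ) {M : Matrix Ω Ω ℂ} (hM : M.IsHermitian) :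
    relEntropy M (ampliation e (partialTrace e M)) =
      entropyLn (partialTrace e M) - entropyLn M := by
  have hM' := isHermitian_partialTrace e hM
  rw [relEntropy_eq_neg_entropyLn_sub hM, cfc_ampliation e hM', trace_mul_ampliation,
    entropyLn_eq_neg_re_trace_mul_cfc_log hM']
  ring

end Ampliation

lemma partialTrace_partialTrace {δ : Type*} [Fintype γ] [Fintype δ] (e : Ω ≃ α × γ)
    (f : α ≃ β × δ) (M : Matrix Ω Ω ℂ) :
    partialTrace f (partialTrace e M) =
      partialTrace ((e.trans (f.prodCongr (Equiv.refl γ))).trans (Equiv.prodAssoc β δ γ)) M := by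
  ext u v
  simp only [partialTrace, of_apply, Fintype.sum_prod_type]
  rfl

lemma partialTrace_prodComm_partialTrace [Fintype α] [Fintype γ]
    (M : Matrix ((α × β) × γ) ((α × β) × γ) ℂ) :
    partialTrace (Equiv.prodComm α β) (partialTrace (Equiv.refl ((α × β) × γ)) M) =
      partialTrace (Equiv.refl (β × γ))
        (partialTrace ((Equiv.prodAssoc α β γ).trans (Equiv.prodComm α (β × γ))) M) := by
  ext u v
  exact Finset.sum_comm

lemma partialTrace_trans_prodCongr {α' γ' : Type*} [Fintype γ] [Fintype γ'] (e : Ω ≃ α × γ)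
    (g : α ≃ α') (h : γ ≃ γ') (M : Matrix Ω Ω ℂ) :
    partialTrace (e.trans (g.prodCongr h)) M = (partialTrace e M).submatrix g.symm g.symm := by
  ext u v
  exact h.symm.sum_comp fun w => M (e.symm (g.symm u, w)) (e.symm (g.symm v, w))

lemma tendsto_entropyLn_partialTrace_add_smul_one [DecidableEq Ω] [Fintype α] [DecidableEq α]
    [Fintype γ] (e : Ω ≃ α × γ) {M : Matrix Ω Ω ℂ} (hM : M.IsHermitian) :
    Tendsto (fun x : ℝ => entropyLn (partialTrace e (M + (x : ℂ) • 1))) (𝓝 0)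
      (𝓝 (entropyLn (partialTrace e M))) := by
  have hscale : Tendsto (fun x : ℝ => Fintype.card γ * x) (𝓝 0) (𝓝 0) :=
    (continuous_const_mul (Fintype.card γ : ℝ)).tendsto' 0 0 (mul_zero _)
  simpa only [Function.comp_def, partialTrace_add_smul_one, Complex.ofReal_mul,
    Complex.ofReal_natCast] using
    (tendsto_entropyLn_add_smul_one (isHermitian_partialTrace e hM)).comp hscale

section StrongSubadditivity

variable [Fintype α] [DecidableEq α] [Fintype β] [DecidableEq β] [Fintype γ] [DecidableEq γ]

lemma partialTrace_ampliation_refl (X : Matrix (α × β) (α × β) ℂ) :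
    partialTrace ((Equiv.prodAssoc α β γ).trans (Equiv.prodComm α (β × γ)))
        (ampliation (Equiv.refl ((α × β) × γ)) X) =
      ampliation (Equiv.refl (β × γ)) (partialTrace (Equiv.prodComm α β) X) := by
  ext u v
  simp only [partialTrace, of_apply, ampliation_apply]
  change ∑ a, (if u.2 = v.2 then X (a, u.1) (a, v.1) else 0) =
    if u.2 = v.2 then ∑ a, X (a, u.1) (a, v.1) else 0
  split_ifs
  · rfl
  · exact Finset.sum_const_zero

/-- Monotonicity of `S(ρ_ABC‖ρ_AB ⊗ 1)` under tracing out `A`. -/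
theorem entropyLn_strongSubadditive_of_posDef [Nonempty α] [Nonempty γ]
    {ρ : Matrix ((α × β) × γ) ((α × β) × γ) ℂ} (hρ : ρ.PosDef) :
    let eBC := (Equiv.prodAssoc α β γ).trans (Equiv.prodComm α (β × γ))
    entropyLn ρ + entropyLn (partialTrace (Equiv.refl (β × γ)) (partialTrace eBC ρ)) ≤
      entropyLn (partialTrace (Equiv.refl _) ρ) + entropyLn (partialTrace eBC ρ) := by
  intro eBC
  set ρAB := partialTrace (Equiv.refl _) ρ
  set ρBC := partialTrace eBC ρ
  have hρAB : ρAB.PosDef := posDef_partialTrace _ hρ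
  have hρBC : ρBC.PosDef := posDef_partialTrace _ hρ
  have hρB : (partialTrace (Equiv.refl _) ρBC).PosDef := posDef_partialTrace _ hρBC
  have hdpi := relEntropy_le_of_starAlgHom hρ (posDef_ampliation _ hρAB) hρBC
    (posDef_ampliation _ hρB) (ampliation eBC) (trace_mul_ampliation eBC ρ) fun X => by
      rw [trace_mul_ampliation, partialTrace_ampliation_refl, partialTrace_prodComm_partialTrace]
  rw [relEntropy_ampliation_partialTrace _ hρ.isHermitian,
    relEntropy_ampliation_partialTrace _ hρBC.isHermitian] at hdpi
  linarith

end StrongSubadditivity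

end PartialTrace

section Reduced

variable {n k : ℕ} {ρ : Matrix (Fin k → Fin n) (Fin k → Fin n) ℂ}

lemma reduced_eq_partialTrace (ρ : Matrix (Fin k → Fin n) (Fin k → Fin n) ℂ)
    (S : Finset (Fin k)) :
    reduced ρ S = partialTrace (Equiv.piEquivPiSubtypeProd (· ∈ S) fun _ => Fin n) ρ :=
  rfl

lemma entropyLn_reduced_eq [NeZero n] (hρ : ρ.IsHermitian) {S : Finset (Fin k)} {α γ : Type*}
    [Fintype α] [DecidableEq α] [Fintype γ] (r : (Fin k → Fin n) ≃ α × γ)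
    (hfst : DependsOn (fun f => (r f).1) (S : Set (Fin k)))
    (hsnd : DependsOn (fun f => (r f).2) (S : Set (Fin k))ᶜ) :
    entropyLn (reduced ρ S) = entropyLn (partialTrace r ρ) := by
  set p := Equiv.piEquivPiSubtypeProd (· ∈ S) fun _ : Fin k => Fin n
  have : Nonempty (α × γ) := r.symm.nonempty
  have : Nonempty α := this.map Prod.fst
  have : Nonempty γ := ‹Nonempty (α × γ)›.map Prod.snd
  obtain ⟨g : ({i // i ∈ S} → Fin n) → α, hg⟩ := dependsOn_iff_exists_comp.1 hfst
  obtain ⟨h : ({i // i ∉ S} → Fin n) → γ, hh⟩ := dependsOn_iff_exists_comp.1 hsnd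
  have hr : r = Prod.map g h ∘ p := funext fun f => Prod.ext (congrFun hg f) (congrFun hh f)
  have hgh : Function.Bijective g ∧ Function.Bijective h := by
    rw [← Prod.map_bijective, ← Function.Bijective.of_comp_iff _ p.bijective, ← hr]
    exact r.bijective
  have hrp : r = p.trans ((Equiv.ofBijective g hgh.1).prodCongr (Equiv.ofBijective h hgh.2)) :=
    DFunLike.coe_injective hr
  rw [hrp, partialTrace_trans_prodCongr,
    entropyLn_submatrix_equiv (isHermitian_partialTrace p hρ), reduced_eq_partialTrace]

lemma entropyLn_reduced_univ [NeZero n] (hρ : ρ.IsHermitian) :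
    entropyLn (reduced ρ Finset.univ) = entropyLn ρ := by
  have htrivial : partialTrace (Equiv.prodPUnit.{0} (Fin k → Fin n)).symm ρ = ρ := by
    ext u v
    exact Fintype.sum_unique fun _ : PUnit => ρ u v
  rw [entropyLn_reduced_eq hρ (Equiv.prodPUnit.{0} (Fin k → Fin n)).symm, htrivial]
  · rw [Finset.coe_univ]
    exact dependsOn_univ _
  · exact (dependsOn_const PUnit.unit).mono (Set.empty_subset _)

lemma entropyLn_reduced_empty (hρ : ρ.IsHermitian) :
    entropyLn (reduced ρ ∅) = Real.negMulLog (trace ρ).re := by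
  rw [reduced_eq_partialTrace, entropyLn_of_unique (isHermitian_partialTrace _ hρ),
    trace_partialTrace]

/-- Restriction of a function to the four regions `S \ T`, `S ∩ T`, `T \ S` and `(S ∪ T)ᶜ`
cut out by two sets. -/
def piEquivVenn {ι : Type*} [DecidableEq ι] (S T : Finset ι) (X : Type*) :
    (ι → X) ≃ (((↥(S \ T) → X) × (↥(S ∩ T) → X)) × (↥(T \ S) → X)) × ({i // i ∉ S ∪ T} → X) where
  toFun f := (((fun i => f i, fun i => f i), fun i => f i), fun i => f i)
  invFun g i :=
    if hS : i ∈ S then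
      if hT : i ∈ T then g.1.1.2 ⟨i, Finset.mem_inter.2 ⟨hS, hT⟩⟩
      else g.1.1.1 ⟨i, Finset.mem_sdiff.2 ⟨hS, hT⟩⟩
    else
      if hT : i ∈ T then g.1.2 ⟨i, Finset.mem_sdiff.2 ⟨hT, hS⟩⟩
      else g.2 ⟨i, by simp only [Finset.mem_union, hS, hT, or_self, not_false_iff]⟩
  left_inv f := by
    ext i
    simp only [dite_eq_ite, ite_self]
  right_inv g := by
    refine Prod.ext (Prod.ext (Prod.ext ?_ ?_) ?_) ?_ <;> funext i
    · exact (dif_pos (Finset.mem_sdiff.1 i.2).1).trans (dif_neg (Finset.mem_sdiff.1 i.2).2)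
    · exact (dif_pos (Finset.mem_inter.1 i.2).1).trans (dif_pos (Finset.mem_inter.1 i.2).2)
    · exact (dif_neg (Finset.mem_sdiff.1 i.2).2).trans (dif_pos (Finset.mem_sdiff.1 i.2).1)
    · have hi := not_or.1 (mt Finset.mem_union.2 i.2)
      exact (dif_neg hi.1).trans (dif_neg hi.2)

lemma entropyLn_reduced_submodular_of_posDef [NeZero n] (hρ : ρ.PosDef) (S T : Finset (Fin k)) :
    entropyLn (reduced ρ (S ∪ T)) + entropyLn (reduced ρ (S ∩ T)) ≤
      entropyLn (reduced ρ S) + entropyLn (reduced ρ T) := by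
  have hssa := entropyLn_strongSubadditive_of_posDef
    (posDef_partialTrace (piEquivVenn S T (Fin n)) hρ)
  have hρ := hρ.isHermitian
  simp only [partialTrace_partialTrace] at hssa
  rwa [← entropyLn_reduced_eq (S := S ∪ T) hρ, ← entropyLn_reduced_eq (S := S ∩ T) hρ,
    ← entropyLn_reduced_eq (S := S) hρ, ← entropyLn_reduced_eq (S := T) hρ] at hssa
  -- In each identification the kept (traced out) coordinates depend only on indices in (outside)
  -- the set.
  all_goals
    intro f g hfg
    simp only [piEquivVenn, Equiv.trans_apply, Equiv.coe_fn_mk, Equiv.prodCongr_apply,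
      Equiv.coe_trans, Equiv.coe_prodComm, Equiv.coe_refl, Prod.map_apply, Function.comp_apply,
      Equiv.prodAssoc_apply, Prod.swap_prod_mk, id_eq, Prod.mk.injEq, funext_iff, Subtype.forall,
      Finset.mem_sdiff, Finset.mem_inter, Finset.mem_union]
    grind

theorem entropyLn_reduced_submodular [NeZero n] (hρ : ρ.PosSemidef) (S T : Finset (Fin k)) :
    entropyLn (reduced ρ (S ∪ T)) + entropyLn (reduced ρ (S ∩ T)) ≤
      entropyLn (reduced ρ S) + entropyLn (reduced ρ T) := by
  have hlim (A : Finset (Fin k)) :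
      Tendsto (fun x : ℝ => entropyLn (reduced (ρ + (x : ℂ) • 1) A)) (𝓝[>] 0)
        (𝓝 (entropyLn (reduced ρ A))) :=
    (tendsto_entropyLn_partialTrace_add_smul_one
      (Equiv.piEquivPiSubtypeProd (· ∈ A) fun _ => Fin n) hρ.isHermitian).mono_left
      nhdsWithin_le_nhds
  refine le_of_tendsto_of_tendsto ((hlim (S ∪ T)).add (hlim (S ∩ T)))
    ((hlim S).add (hlim T)) ?_
  filter_upwards [self_mem_nhdsWithin] with x (hx : 0 < x)
  exact entropyLn_reduced_submodular_of_posDef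
    (PosDef.posSemidef_add hρ (PosDef.one.smul (by exact_mod_cast hx))) S T

end Reduced

section Submodular

variable {ι : Type*}

/-- `x` is the greedy vertex of the base polytope of `F`. -/
lemma exists_sum_le_of_submodular [DecidableEq ι] {F : Finset ι → ℝ}
    (hF : ∀ S T, F (S ∪ T) + F (S ∩ T) ≤ F S + F T) (U : Finset ι) :
    ∃ x : ι → ℝ, (∀ A ⊆ U, ∑ i ∈ A, x i ≤ F A - F ∅) ∧ ∑ i ∈ U, x i = F U - F ∅ := by
  induction U using Finset.induction_on with
  | empty =>
    refine ⟨0, fun A hA => ?_, by rw [Finset.sum_empty, sub_self]⟩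
    rw [Finset.subset_empty.1 hA, Finset.sum_empty, sub_self]
  | insert a U ha ih =>
    obtain ⟨x, hle, heq⟩ := ih
    set y := Function.update x a (F (insert a U) - F U)
    have hy {A : Finset ι} (hA : a ∉ A) : ∑ i ∈ A, y i = ∑ i ∈ A, x i :=
      Finset.sum_update_of_notMem hA _ _
    have hya {A : Finset ι} (hA : a ∉ A) :
        ∑ i ∈ insert a A, y i = F (insert a U) - F U + ∑ i ∈ A, x i := by
      rw [Finset.sum_insert hA, hy hA]
      exact congrArg (· + _) (Function.update_self a _ x)
    refine ⟨y, fun A hA => ?_, by rw [hya ha, heq]; ring⟩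
    by_cases haA : a ∈ A
    · have hsub : A.erase a ⊆ U := Finset.subset_insert_iff.1 hA
      have hsubmod := hF A U
      have hunion : A ∪ U = insert a U := by grind
      have hinter : A ∩ U = A.erase a := by grind
      rw [hunion, hinter] at hsubmod
      rw [← Finset.insert_erase haA, hya (Finset.notMem_erase a A), Finset.insert_erase haA]
      linarith [hle _ hsub]
    · rw [hy haA]
      exact hle A ((Finset.subset_insert_iff_of_notMem haA).1 hA)

variable [Fintype ι]

lemma card_mul_card_filter_mem_powersetCard [DecidableEq ι] (s : ℕ) (i : ι) :
    Fintype.card ι * {A ∈ Finset.powersetCard s (Finset.univ : Finset ι) | i ∈ A}.card =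
      s * (Fintype.card ι).choose s := by
  cases s with
  | zero => simp
  | succ s =>
    have hι : Fintype.card ι - 1 + 1 = Fintype.card ι :=
      Nat.sub_add_cancel (Fintype.card_pos_iff.2 ⟨i⟩)
    have hcard := Finset.card_filter_powersetCard_subset {i} Finset.univ (s + 1)
      (Finset.subset_univ _) (by simp)
    simp only [Finset.singleton_subset_iff, Finset.card_singleton, Finset.card_univ,
      Nat.add_sub_cancel] at hcard
    rw [hcard, mul_comm (s + 1), ← hι, Nat.add_sub_cancel, Nat.add_one_mul_choose_eq]

lemma sum_powersetCard_sum (x : ι → ℝ) (s : ℕ) :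
    Fintype.card ι * ∑ A ∈ Finset.powersetCard s Finset.univ, ∑ i ∈ A, x i =
      s * (Fintype.card ι).choose s * ∑ i, x i := by
  classical
  rw [Finset.sum_comm' (t' := Finset.univ)
    (s' := fun i => {A ∈ Finset.powersetCard s Finset.univ | i ∈ A}) (by simp)]
  simp only [Finset.sum_const, nsmul_eq_mul, Finset.mul_sum, ← mul_assoc]
  refine Finset.sum_congr rfl fun i _ => congrArg (· * x i) ?_
  exact_mod_cast card_mul_card_filter_mem_powersetCard s i

theorem han_inequality_of_submodular [DecidableEq ι] [Nonempty ι] {F : Finset ι → ℝ}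
    (hF : ∀ S T, F (S ∪ T) + F (S ∩ T) ≤ F S + F T) {s : ℕ} (hs : s ≤ Fintype.card ι) :
    (s / Fintype.card ι : ℝ) * F Finset.univ + (1 - s / Fintype.card ι : ℝ) * F ∅ ≤
      1 / (Fintype.card ι).choose s * ∑ A ∈ Finset.powersetCard s Finset.univ, F A := by
  obtain ⟨x, hle, heq⟩ := exists_sum_le_of_submodular hF Finset.univ
  have hmean := sum_powersetCard_sum x s
  rw [heq] at hmean
  have hsum : ∑ A ∈ Finset.powersetCard s Finset.univ, ∑ i ∈ A, x i ≤
      ∑ A ∈ Finset.powersetCard s Finset.univ, F A - (Fintype.card ι).choose s * F ∅ := by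
    refine (Finset.sum_le_sum fun A _ => hle A (Finset.subset_univ A)).trans_eq ?_
    rw [Finset.sum_sub_distrib, Finset.sum_const, Finset.card_powersetCard, Finset.card_univ,
      nsmul_eq_mul]
  have hchoose : (0 : ℝ) < (Fintype.card ι).choose s := Nat.cast_pos.2 (Nat.choose_pos hs)
  calc (s / Fintype.card ι : ℝ) * F Finset.univ + (1 - s / Fintype.card ι : ℝ) * F ∅
      = 1 / (Fintype.card ι).choose s *
          (∑ A ∈ Finset.powersetCard s Finset.univ, ∑ i ∈ A, x i +
            (Fintype.card ι).choose s * F ∅) := by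
        field_simp
        linear_combination -hmean
    _ ≤ 1 / (Fintype.card ι).choose s * ∑ A ∈ Finset.powersetCard s Finset.univ, F A := by
        gcongr
        linarith

end Submodular

theorem statement17_general (n k : ℕ) (hn : 1 ≤ n) (hk : 1 ≤ k) (s : ℕ) (hs : s ≤ k)
    (ρ : Matrix (Fin k → Fin n) (Fin k → Fin n) ℂ) (hρ : ρ.PosSemidef) :
    ((s : ℝ) / k) * entropyLn ρ + (1 - (s : ℝ) / k) * Real.negMulLog (trace ρ).re ≤
      (1 / (Nat.choose k s : ℝ)) *
        ∑ A ∈ Finset.powersetCard s (Finset.univ : Finset (Fin k)),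
          entropyLn (reduced ρ A) := by
  have : NeZero n := ⟨(zero_lt_one.trans_le hn).ne'⟩
  have : NeZero k := ⟨(zero_lt_one.trans_le hk).ne'⟩
  have hhan := han_inequality_of_submodular (F := fun A => entropyLn (reduced ρ A))
    (entropyLn_reduced_submodular hρ) (hs.trans_eq (Fintype.card_fin k).symm)
  simpa only [Fintype.card_fin, entropyLn_reduced_univ hρ.isHermitian,
    entropyLn_reduced_empty hρ.isHermitian] using hhan

/-- for every density matrix `ρ` on `(ℂ^n)^{⊗k}` and `0 ≤ s ≤ k`,
`(s/k) S(ρ) ≤ (1/binom(k,s)) ∑_{|A| = s} S(ρ_A)`. -/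
theorem statement17 (n k : ℕ) (hn : 1 ≤ n) (hk : 1 ≤ k) (s : ℕ) (hs : s ≤ k)
    (ρ : Matrix (Fin k → Fin n) (Fin k → Fin n) ℂ)
    (hρ : ρ.PosSemidef) (hτ : Matrix.trace ρ = 1) :
    ((s : ℝ) / k) * entropyLn ρ ≤
      (1 / (Nat.choose k s : ℝ)) *
        ∑ A ∈ Finset.powersetCard s (Finset.univ : Finset (Fin k)),
          entropyLn (reduced ρ A) := by
  simpa only [hτ, Complex.one_re, Real.negMulLog_one, mul_zero, add_zero] using
    statement17_general n k hn hk s hs ρ hρ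
end
end
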